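/- Let Q be a privacy protocol all of whose entries are positive and whose rank is a, and let μ be a Borel probability measure on the simplex 𝒫 having a continuous density f, with p ↦ log det D_p and p ↦ log det G_p − Σ_{y=1}^b log((Qp)_y) μ-integrable. Then liminf_{n→∞} n · MSE^freq_{μ,n}(Q,Φ_opt,n) ≥ (a/(2πe)) · e^{(2/(a−1))·δ_μ(Q)}. -/

import Mathlib

/-!
The proof replaces the limiting behaviour of the posterior mean by a van Trees type inequality valid
for every estimator. Put `r = Qp` and `V_p = D_p⁻¹ - diag(p)`.

*Asymptotic lower bound.* Fix a symbol `α` and an estimator `Φ` of its frequency. For fixed `p`,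
testing the error `F_α - Φ` against a statistic `h ∑ᵢ (1[xᵢ = α] - s(yᵢ)) + ρ` bounds the risk
from below (`risk_lower_bound`). Here `s(y) = (Qw)_y / r_y` with `w = p_α e_α - u`, and `u` is a
smooth field tangent to the simplex. The prior density is replaced by a minorant `h²` with `h`
smooth and supported in `Δ`, and `ρ` is chosen so that `h ρ` is the divergence of `h² u`. Since
`lik · ∑ᵢ (Qu)_{yᵢ} / r_{yᵢ}` is the derivative of the likelihood along `u`, integration by parts
removes all terms that involve `Φ`, and
`n · risk ≥ ∫ h² (2 w_α - p_α - wᵀ D_p w) - O(1/n)` (`integral_risk_lower_bound`). The optimal choice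
`u = -(V_p)_α`, that is `w = (D_p⁻¹)_α`, turns the integrand into `h² (V_p)_{αα}`. Approximating this
`u` and `√f` by smooth functions and summing over `α` gives `liminf n · MSE ≥ ∫ tr V_p dμ`
(`exists_risk_bound`, `trace_integral_le_liminf`). No assumption at the boundary of `Δ` is needed.
An unbiased linear estimator shows that `n · MSE` is bounded (`exists_MSEfreq_upper`), so that the
real-valued `liminf` is not a junk value.

*From the trace to determinants.* `V_p` is positive semidefinite and annihilates the all-ones
vector, so the AM-GM inequality for its other `a - 1` eigenvalues bounds `tr V_p` from below in terms
of `det (V_p + p pᵀ)` (`trace_ge_of_posSemidef`). Sylvester's determinant identity gives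
`det G_p = ∏ r_y · det D_p · det (V_p + p pᵀ)` (`det_Gmat_eq_mul`). Together they yield
`tr V_p ≥ a exp((log det G_p - ∑ log r_y - log det D_p) / (a - 1))` (`trace_Vmat_ge`), and Jensen's
inequality for `exp` gives the bound in terms of `δ_μ(Q)`.
-/

open MeasureTheory Matrix Finset Filter Real

noncomputable section

/-- The probability simplex in `ℝ^a`. -/
def simplex (a : ℕ) : Set (Fin a → ℝ) :=
  {p | (∀ x, 0 ≤ p x) ∧ ∑ x, p x = 1}

/-- Likelihood `L_y(p) = ∏ i, (Qp)_{y i}`. -/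
def lik {a b n : ℕ} (Q : Matrix (Fin b) (Fin a) ℝ) (y : Fin n → Fin b)
    (p : Fin a → ℝ) : ℝ :=
  ∏ i, Q.mulVec p (y i)

/-- Mean squared error for distribution estimation. -/
def MSEdistr {a b n : ℕ} (Q : Matrix (Fin b) (Fin a) ℝ) (μ : Measure (Fin a → ℝ))
    (Est : (Fin n → Fin b) → (Fin a → ℝ)) : ℝ :=
  ∑ y : (Fin n → Fin b), ∫ p, (∑ x, (p x - Est y x) ^ 2) * lik Q y p ∂μ

/-- The posterior-mean estimator for distribution estimation. -/
def PiOpt {a b n : ℕ} (Q : Matrix (Fin b) (Fin a) ℝ) (μ : Measure (Fin a → ℝ))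
    (y : Fin n → Fin b) : Fin a → ℝ :=
  fun x => (∫ p, p x * lik Q y p ∂μ) / (∫ p, lik Q y p ∂μ)

/-- Empirical frequency vector of a data vector. -/
def freqVec {a n : ℕ} (xv : Fin n → Fin a) : Fin a → ℝ :=
  fun α => ((Finset.univ.filter fun i => xv i = α).card : ℝ) / n

/-- Joint weight `w(x⃗,y⃗) = ∫ ∏ i, p_{x_i} Q_{y_i|x_i} dμ(p)`. -/
def wgt {a b n : ℕ} (Q : Matrix (Fin b) (Fin a) ℝ) (μ : Measure (Fin a → ℝ))
    (xv : Fin n → Fin a) (y : Fin n → Fin b) : ℝ :=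
  ∫ p, (∏ i, p (xv i) * Q (y i) (xv i)) ∂μ

/-- Mean squared error for frequency estimation. -/
def MSEfreq {a b n : ℕ} (Q : Matrix (Fin b) (Fin a) ℝ) (μ : Measure (Fin a → ℝ))
    (Est : (Fin n → Fin b) → (Fin a → ℝ)) : ℝ :=
  ∑ xv : (Fin n → Fin a), ∑ y : (Fin n → Fin b),
    wgt Q μ xv y * ∑ α, (freqVec xv α - Est y α) ^ 2

/-- The posterior-mean estimator for frequency estimation. -/
def PhiOpt {a b n : ℕ} (Q : Matrix (Fin b) (Fin a) ℝ) (μ : Measure (Fin a → ℝ))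
    (y : Fin n → Fin b) : Fin a → ℝ :=
  fun α => (∑ xv : (Fin n → Fin a), wgt Q μ xv y * freqVec xv α) /
    (∑ xv : (Fin n → Fin a), wgt Q μ xv y)

/-- `P(φ, y⃗) = ∑_{x⃗ : F(x⃗) = φ} w(x⃗, y⃗)`. -/
def Pphi {a b n : ℕ} (Q : Matrix (Fin b) (Fin a) ℝ) (μ : Measure (Fin a → ℝ))
    (φ : Fin a → ℝ) (y : Fin n → Fin b) : ℝ := by
  classical
  exact ∑ xv ∈ Finset.univ.filter (fun xv : Fin n → Fin a => freqVec xv = φ), wgt Q μ xv y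

/-- Conditional Shannon entropy `H_n(F | Y⃗)` (terms with zero probability vanish since
`Real.log 0 = 0`). -/
def HFcond {a b : ℕ} (Q : Matrix (Fin b) (Fin a) ℝ) (μ : Measure (Fin a → ℝ))
    (n : ℕ) : ℝ := by
  classical
  exact -(∑ y : (Fin n → Fin b), ∑ φ ∈ Finset.image (freqVec (a := a) (n := n)) Finset.univ,
      Pphi Q μ φ y * Real.log (Pphi Q μ φ y /
        ∑ φ' ∈ Finset.image (freqVec (a := a) (n := n)) Finset.univ, Pphi Q μ φ' y))

/-- The set `Δ = {q ∈ ℝ^m : q ≥ 0, ∑ q ≤ 1}`. -/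
def stdCorner (m : ℕ) : Set (Fin m → ℝ) :=
  {q | (∀ i, 0 ≤ q i) ∧ ∑ i, q i ≤ 1}

/-- The identification `Δ ⊂ ℝ^{a-1} → 𝒫 ⊂ ℝ^a`,
`q ↦ (q_1, …, q_{a-1}, 1 - ∑ q_i)`. -/
def emb (a : ℕ) (q : Fin (a - 1) → ℝ) : Fin a → ℝ :=
  fun x => if h : (x : ℕ) < a - 1 then q ⟨x.1, h⟩ else 1 - ∑ i, q i

/-- `μ` has density `f` (w.r.t. Lebesgue measure on `Δ`). -/
def IsDensity {a : ℕ} (μ : Measure (Fin a → ℝ)) (f : (Fin (a - 1) → ℝ) → ℝ) : Prop :=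
  Measurable f ∧ (∀ q, 0 ≤ f q) ∧ (∫ q in stdCorner (a - 1), f q) = 1 ∧
  ∀ g : (Fin a → ℝ) → ℝ, Measurable g → (∃ C, ∀ p, |g p| ≤ C) →
    (∫ p, g p ∂μ) = ∫ q in stdCorner (a - 1), g (emb a q) * f q

/-- `μ` has continuous density `f`. -/
def IsContDensity {a : ℕ} (μ : Measure (Fin a → ℝ)) (f : (Fin (a - 1) → ℝ) → ℝ) : Prop :=
  ContinuousOn f (stdCorner (a - 1)) ∧ (∀ q, 0 ≤ f q) ∧
  (∫ q in stdCorner (a - 1), f q) = 1 ∧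
  ∀ g : (Fin a → ℝ) → ℝ, Measurable g → (∃ C, ∀ p, |g p| ≤ C) →
    (∫ p, g p ∂μ) = ∫ q in stdCorner (a - 1), g (emb a q) * f q

/-- Normalisation constant `C_{y⃗} = ∫_Δ f(q) L_{y⃗}(p(q)) dλ(q)`. -/
def Cw {a b n : ℕ} (Q : Matrix (Fin b) (Fin a) ℝ) (f : (Fin (a - 1) → ℝ) → ℝ)
    (y : Fin n → Fin b) : ℝ :=
  ∫ q in stdCorner (a - 1), f q * lik Q y (emb a q)

/-- Posterior density `g_{y⃗}(q) = f(q) L_{y⃗}(p(q)) / C_{y⃗}`. -/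
def gpost {a b n : ℕ} (Q : Matrix (Fin b) (Fin a) ℝ) (f : (Fin (a - 1) → ℝ) → ℝ)
    (y : Fin n → Fin b) (q : Fin (a - 1) → ℝ) : ℝ :=
  f q * lik Q y (emb a q) / Cw Q f y

/-- Conditional differential entropy `h_n(P | Y⃗)`. -/
def hCond {a b : ℕ} (Q : Matrix (Fin b) (Fin a) ℝ) (f : (Fin (a - 1) → ℝ) → ℝ)
    (n : ℕ) : ℝ :=
  ∑ y : (Fin n → Fin b),
    Cw Q f y * (-(∫ q in stdCorner (a - 1), gpost Q f y q * Real.log (gpost Q f y q)))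

/-- The matrix `D_p = Qᵀ · diag(Qp)⁻¹ · Q`. -/
def Dmat {a b : ℕ} (Q : Matrix (Fin b) (Fin a) ℝ) (p : Fin a → ℝ) :
    Matrix (Fin a) (Fin a) ℝ :=
  Qᵀ * Matrix.diagonal (fun y => (Q.mulVec p y)⁻¹) * Q

/-- The constant `γ_μ(Q)`. -/
def gammaMu {a b : ℕ} (Q : Matrix (Fin b) (Fin a) ℝ) (μ : Measure (Fin a → ℝ)) : ℝ :=
  (((a : ℝ) - 1) / 2) * Real.log (2 * π * Real.exp 1) -
    (1 / 2) * ∫ p, Real.log (Dmat Q p).det ∂μ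

/-- The truncated column `w_x = (Q_{1|x}, …, Q_{b-1|x})`. -/
def wcol {a b : ℕ} (Q : Matrix (Fin b) (Fin a) ℝ) (x : Fin a) : Fin (b - 1) → ℝ :=
  fun y => Q ⟨y.1, lt_of_lt_of_le y.2 (Nat.sub_le b 1)⟩ x

/-- The matrix `E_x = diag(w_x) - w_x w_xᵀ`. -/
def Emat {a b : ℕ} (Q : Matrix (Fin b) (Fin a) ℝ) (x : Fin a) :
    Matrix (Fin (b - 1)) (Fin (b - 1)) ℝ :=
  Matrix.diagonal (wcol Q x) - Matrix.vecMulVec (wcol Q x) (wcol Q x)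

/-- The matrix `G_p = ∑ x, p_x E_x`. -/
def Gmat {a b : ℕ} (Q : Matrix (Fin b) (Fin a) ℝ) (p : Fin a → ℝ) :
    Matrix (Fin (b - 1)) (Fin (b - 1)) ℝ :=
  ∑ x, p x • Emat Q x

/-- The constant `δ_μ(Q)`. -/
def deltaMu {a b : ℕ} (Q : Matrix (Fin b) (Fin a) ℝ) (μ : Measure (Fin a → ℝ)) : ℝ :=
  gammaMu Q μ +
    (1 / 2) * ∫ p, (Real.log (Gmat Q p).det - ∑ y, Real.log (Q.mulVec p y)) ∂μ

/-- `Q` satisfies `ε`-local differential privacy. -/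
def SatisfiesLDP {a b : ℕ} (Q : Matrix (Fin b) (Fin a) ℝ) (ε : ℝ) : Prop :=
  ∀ x x' : Fin a, ∀ y : Fin b, Q y x' ≤ Real.exp ε * Q y x

/-! ### Determinants of `D_p` and `G_p` -/

theorem mulVec_pos_of_simplex {a b : ℕ} {Q : Matrix (Fin b) (Fin a) ℝ}
    (hQpos : ∀ y x, 0 < Q y x) {p : Fin a → ℝ} (hp : p ∈ simplex a) (y : Fin b) :
    0 < Q.mulVec p y := by
  obtain ⟨h0, h1⟩ := hp
  have hne : ∃ x ∈ Finset.univ, p x ≠ 0 := by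
    apply Finset.exists_ne_zero_of_sum_ne_zero
    rw [h1]; exact one_ne_zero
  obtain ⟨x, -, hx⟩ := hne
  refine Finset.sum_pos' (fun x _ => mul_nonneg (hQpos y x).le (h0 x)) ⟨x, Finset.mem_univ _, ?_⟩
  exact mul_pos (hQpos y x) (lt_of_le_of_ne (h0 x) (Ne.symm hx))

theorem sum_mulVec_eq {a b : ℕ} {Q : Matrix (Fin b) (Fin a) ℝ}
    (hQcol : ∀ x, ∑ y, Q y x = 1) (p : Fin a → ℝ) :
    ∑ y, Q.mulVec p y = ∑ x, p x := by
  simp only [Matrix.mulVec, dotProduct]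
  rw [Finset.sum_comm]
  simp [← Finset.sum_mul, hQcol]

theorem Dmat_apply {a b : ℕ} (Q : Matrix (Fin b) (Fin a) ℝ) (p : Fin a → ℝ) (i j : Fin a) :
    Dmat Q p i j = ∑ y, Q y i * (Q.mulVec p y)⁻¹ * Q y j := by
  rw [Dmat, Matrix.mul_apply]
  simp only [Matrix.mul_diagonal, Matrix.transpose_apply]

theorem Dmat_posDef {a b : ℕ} {Q : Matrix (Fin b) (Fin a) ℝ}
    (hQpos : ∀ y x, 0 < Q y x) (hrank : Q.rank = a)
    {p : Fin a → ℝ} (hp : p ∈ simplex a) : (Dmat Q p).PosDef := by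
  have hd : (Matrix.diagonal (fun y => (Q.mulVec p y)⁻¹)).PosDef := by
    rw [Matrix.posDef_diagonal_iff]
    exact fun y => inv_pos.2 (mulVec_pos_of_simplex hQpos hp y)
  have hinj : Function.Injective Q.mulVec := by
    have hl : LinearIndependent ℝ Q.col := by
      rw [linearIndependent_iff_card_eq_finrank_span, Fintype.card_fin]
      exact hrank.symm.trans (Matrix.rank_eq_finrank_span_cols Q)
    exact Matrix.mulVec_injective_iff.2 hl
  have := hd.conjTranspose_mul_mul_same hinj
  simpa [Dmat, Matrix.conjTranspose_eq_transpose_of_trivial] using this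

theorem Dmat_mulVec {a b : ℕ} {Q : Matrix (Fin b) (Fin a) ℝ}
    (hQpos : ∀ y x, 0 < Q y x) (hQcol : ∀ x, ∑ y, Q y x = 1)
    {p : Fin a → ℝ} (hp : p ∈ simplex a) : Dmat Q p *ᵥ p = 1 := by
  funext i
  rw [Dmat, ← Matrix.mulVec_mulVec, ← Matrix.mulVec_mulVec]
  have : Matrix.diagonal (fun y => (Q.mulVec p y)⁻¹) *ᵥ (Q *ᵥ p) = 1 := by
    funext y
    rw [Matrix.mulVec_diagonal]
    exact inv_mul_cancel₀ (mulVec_pos_of_simplex hQpos hp y).ne'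
  rw [this]
  simp [Matrix.mulVec, dotProduct, hQcol]

/-- Rank-one updates of a matrix annihilated by the all-ones vector on both sides: the congruence
by `1 + 𝟙 (v - p)ᵀ` carries `p pᵀ` to `v vᵀ` and leaves the matrix fixed. -/
theorem det_add_vecMulVec_eq {ι : Type*} [Fintype ι] [DecidableEq ι] (V : Matrix ι ι ℝ)
    (h1 : V *ᵥ 1 = 0) (h2 : 1 ᵥ* V = 0) (p v : ι → ℝ) (hp : ∑ i, p i = 1) :
    (V + vecMulVec v v).det = (∑ i, v i) ^ 2 * (V + vecMulVec p p).det := by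
  have hone : (1 : ι → ℝ) ⬝ᵥ p = 1 := by simpa [dotProduct] using hp
  have key : (1 + vecMulVec (v - p) 1) * (V + vecMulVec p p) * (1 + vecMulVec 1 (v - p))
      = V + vecMulVec v v := by
    have e1 : (1 + vecMulVec (v - p) 1) * (V + vecMulVec p p) = V + vecMulVec v p := by
      rw [add_mul, one_mul, vecMulVec_mul, Matrix.vecMul_add, h2, vecMul_vecMulVec]
      ext i j
      simp [vecMulVec_apply, hone]
      ring
    rw [e1, mul_add, mul_one, mul_vecMulVec, Matrix.add_mulVec, h1, vecMulVec_mulVec]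
    ext i j
    rw [dotProduct_comm] at hone
    simp [vecMulVec_apply, hone]
    ring
  have hd : ∀ z : ι → ℝ, (1 + vecMulVec z 1 : Matrix ι ι ℝ).det = 1 + ∑ i, z i := by
    intro z
    rw [vecMulVec_eq Unit, det_one_add_replicateCol_mul_replicateRow]
    simp [dotProduct]
  have hd' : ∀ z : ι → ℝ, (1 + vecMulVec 1 z : Matrix ι ι ℝ).det = 1 + ∑ i, z i := by
    intro z
    rw [← hd z, ← det_transpose]
    simp
  rw [← key, det_mul, det_mul, hd, hd']
  simp [Finset.sum_sub_distrib, hp]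
  ring

/-- Apply `det_add_vecMulVec_eq` with `v` the last unit vector and expand along the last row. -/
theorem det_submatrix_eq_det_add {m : ℕ} (V : Matrix (Fin (m + 1)) (Fin (m + 1)) ℝ)
    (h1 : V *ᵥ 1 = 0) (h2 : 1 ᵥ* V = 0) (p : Fin (m + 1) → ℝ) (hp : ∑ i, p i = 1) :
    (V.submatrix Fin.castSucc Fin.castSucc).det = (V + vecMulVec p p).det := by
  have h := det_add_vecMulVec_eq V h1 h2 p (Pi.single (Fin.last m) 1) hp
  have h0 := det_add_vecMulVec_eq V h1 h2 p 0 hp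
  simp at h h0
  rw [← h]
  have e : V + vecMulVec (Pi.single (Fin.last m) 1) (Pi.single (Fin.last m) 1)
      = V.updateRow (Fin.last m) (V (Fin.last m) + Pi.single (Fin.last m) 1) := by
    ext i j
    by_cases hi : i = Fin.last m
    · subst hi; simp [vecMulVec_apply]
    · simp [vecMulVec_apply, hi]
  rw [e, det_updateRow_add, updateRow_eq_self, h0, zero_add, ← adjugate_apply,
    adjugate_fin_succ_eq_det_submatrix]
  simp [Fin.succAbove_last, ← two_mul]

/-- The covariance of `Y` averaged over `X`, on all `b` output symbols: `diag(Qp) - Q diag(p) Qᵀ`.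
`Gmat` is its upper left block. -/
def Gfull {a b : ℕ} (Q : Matrix (Fin b) (Fin a) ℝ) (p : Fin a → ℝ) :
    Matrix (Fin b) (Fin b) ℝ :=
  Matrix.diagonal (Q.mulVec p) - Q * Matrix.diagonal p * Qᵀ

theorem Gfull_apply {a b : ℕ} (Q : Matrix (Fin b) (Fin a) ℝ) (p : Fin a → ℝ) (i j : Fin b) :
    Gfull Q p i j = ∑ x, p x * ((if i = j then Q i x else 0) - Q i x * Q j x) := by
  rw [Gfull, Matrix.sub_apply, Matrix.mul_apply]
  simp only [Matrix.mul_diagonal, Matrix.transpose_apply, Matrix.diagonal_apply, Matrix.mulVec,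
    dotProduct, mul_sub, Finset.sum_sub_distrib]
  congr 1
  · split_ifs <;> simp [mul_comm]
  · exact Finset.sum_congr rfl fun x _ => by ring

theorem det_Gmat_eq {a b : ℕ} (hb : 2 ≤ b) {Q : Matrix (Fin b) (Fin a) ℝ}
    (hQcol : ∀ x, ∑ y, Q y x = 1) {p : Fin a → ℝ} (hp : p ∈ simplex a) :
    (Gmat Q p).det = (Gfull Q p + vecMulVec (Q.mulVec p) (Q.mulVec p)).det := by
  obtain ⟨m, rfl⟩ : ∃ m, b = m + 1 := ⟨b - 1, by omega⟩
  have hsymm : (Gfull Q p)ᵀ = Gfull Q p := by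
    ext i j
    simp only [transpose_apply, Gfull_apply]
    refine Finset.sum_congr rfl fun x _ => ?_
    by_cases h : i = j
    · subst h; rfl
    · simp [h, Ne.symm h, mul_comm]
  have h1 : Gfull Q p *ᵥ 1 = 0 := by
    funext i
    simp only [Matrix.mulVec, dotProduct, Gfull_apply, Pi.one_apply, mul_one, Pi.zero_apply]
    rw [Finset.sum_comm]
    refine Finset.sum_eq_zero fun x _ => ?_
    rw [← Finset.mul_sum, Finset.sum_sub_distrib, ← Finset.mul_sum, hQcol]
    simp
  have h2 : 1 ᵥ* Gfull Q p = 0 := by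
    rw [← mulVec_transpose, hsymm, h1]
  rw [← det_submatrix_eq_det_add _ h1 h2 _ (by rw [sum_mulVec_eq hQcol]; exact hp.2)]
  congr 1
  ext i j
  simp only [submatrix_apply, Gfull_apply, Gmat, Matrix.sum_apply, Matrix.smul_apply, Emat,
    Matrix.sub_apply, Matrix.diagonal_apply, vecMulVec_apply, wcol, smul_eq_mul]
  refine Finset.sum_congr rfl fun x _ => ?_
  by_cases h : i = j
  · subst h; simp; left; rfl
  · have : (i.castSucc : Fin (m+1)) ≠ j.castSucc := fun h' => h (Fin.castSucc_injective _ h')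
    simp [h, this]; left; rfl

/-- Sylvester's identity `det (1 - A B) = det (1 - B A)`, after adding the rank-one matrices that make
`G_p` and `V_p` invertible; the matrix on the right is `V_p + p pᵀ`. -/
theorem det_Gmat_eq_mul {a b : ℕ} (hb : 2 ≤ b) {Q : Matrix (Fin b) (Fin a) ℝ}
    (hQpos : ∀ y x, 0 < Q y x) (hQcol : ∀ x, ∑ y, Q y x = 1) (hrank : Q.rank = a)
    {p : Fin a → ℝ} (hp : p ∈ simplex a) :
    (Gmat Q p).det = (∏ y, Q.mulVec p y) * (Dmat Q p).det *
      ((Dmat Q p)⁻¹ - Matrix.diagonal p + vecMulVec p p).det := by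
  rw [det_Gmat_eq hb hQcol hp]
  have hr := mulVec_pos_of_simplex hQpos hp
  have hD := Dmat_posDef hQpos hrank hp
  have hdu : IsUnit (Dmat Q p).det := hD.det_pos.ne'.isUnit
  set C : Matrix (Fin a) (Fin a) ℝ := Matrix.diagonal p - vecMulVec p p with hC
  have e1 : Gfull Q p + vecMulVec (Q.mulVec p) (Q.mulVec p)
      = Matrix.diagonal (Q.mulVec p) *
        (1 - (Matrix.diagonal (fun y => (Q.mulVec p y)⁻¹) * Q * C) * Qᵀ) := by
    have hdd : Matrix.diagonal (Q.mulVec p) * Matrix.diagonal (fun y => (Q.mulVec p y)⁻¹)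
        = 1 := by
      rw [diagonal_mul_diagonal, ← diagonal_one]
      congr 1; funext y; exact mul_inv_cancel₀ (hr y).ne'
    have hv : vecMulVec (Q.mulVec p) (Q.mulVec p) = Q * vecMulVec p p * Qᵀ := by
      rw [mul_vecMulVec, vecMulVec_mul, vecMul_transpose]
    rw [mul_sub, mul_one, ← Matrix.mul_assoc, ← Matrix.mul_assoc, ← Matrix.mul_assoc, hdd,
      Matrix.one_mul, hC, Matrix.mul_sub, Matrix.sub_mul, ← hv, Gfull]
    abel
  have e2 : (1 - Qᵀ * (Matrix.diagonal (fun y => (Q.mulVec p y)⁻¹) * Q * C))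
      = Dmat Q p * ((Dmat Q p)⁻¹ - Matrix.diagonal p + vecMulVec p p) := by
    rw [mul_add, mul_sub, Matrix.mul_nonsing_inv _ hdu, hC]
    simp only [Dmat, Matrix.mul_sub, Matrix.mul_assoc]
    abel
  rw [e1, det_mul, det_diagonal, det_one_sub_mul_comm, e2, det_mul, mul_assoc]

theorem det_Gmat_pos {a b : ℕ} (hb : 2 ≤ b) {Q : Matrix (Fin b) (Fin a) ℝ}
    (hQpos : ∀ y x, 0 < Q y x) (hQcol : ∀ x, ∑ y, Q y x = 1)
    {p : Fin a → ℝ} (hp : p ∈ simplex a) : 0 < (Gmat Q p).det := by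
  rw [det_Gmat_eq hb hQcol hp]
  refine Matrix.PosDef.det_pos ?_
  refine Matrix.PosDef.of_dotProduct_mulVec_pos ?_ ?_
  · ext i j
    simp only [conjTranspose_apply, star_trivial, Matrix.add_apply, Gfull_apply, vecMulVec_apply]
    congr 1
    · refine Finset.sum_congr rfl fun x _ => ?_
      by_cases h : i = j
      · subst h; rfl
      · simp [h, Ne.symm h, mul_comm]
    · ring
  · intro z hz
    -- the quadratic form is `∑ₓ pₓ Var_{Q(·|x)}(z) + (E z)²`
    have key : star z ⬝ᵥ ((Gfull Q p + vecMulVec (Q.mulVec p) (Q.mulVec p)) *ᵥ z)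
        = ∑ x, p x * (∑ y, Q y x * (z y - ∑ y', Q y' x * z y') ^ 2)
          + (∑ y, Q.mulVec p y * z y) ^ 2 := by
      have hvar : ∀ x, ∑ y, Q y x * (z y - ∑ y', Q y' x * z y') ^ 2
          = ∑ i, z i * ∑ j, ((if i = j then Q i x else 0) - Q i x * Q j x) * z j := by
        intro x
        set e := ∑ y', Q y' x * z y' with he
        have l : ∑ y, Q y x * (z y - e) ^ 2 = ∑ y, Q y x * z y ^ 2 - e ^ 2 := by
          have : ∀ y, Q y x * (z y - e) ^ 2
              = Q y x * z y ^ 2 - 2 * e * (Q y x * z y) + e ^ 2 * Q y x := fun y => by ring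
          simp only [this, Finset.sum_add_distrib, Finset.sum_sub_distrib, ← Finset.mul_sum,
            hQcol, ← he]
          ring
        rw [l]
        have : ∀ i, z i * ∑ j, ((if i = j then Q i x else 0) - Q i x * Q j x) * z j
            = Q i x * z i ^ 2 - (Q i x * z i) * e := by
          intro i
          have h' : ∑ j, ((if i = j then Q i x else 0) - Q i x * Q j x) * z j
              = Q i x * z i - Q i x * e := by
            simp only [sub_mul, Finset.sum_sub_distrib, ite_mul, zero_mul, Finset.sum_ite_eq,
              Finset.mem_univ, if_true, he, Finset.mul_sum, mul_assoc]
          rw [h']; ring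
        simp only [this, Finset.sum_sub_distrib, ← Finset.sum_mul, ← he]
        ring
      rw [add_mulVec, dotProduct_add, vecMulVec_mulVec]
      congr 1
      · simp only [hvar, dotProduct, star_trivial, mulVec, Gfull_apply, Finset.sum_mul,
          Finset.mul_sum]
        rw [Finset.sum_comm_cycle]
        refine Finset.sum_congr rfl fun x _ => ?_
        rw [Finset.sum_comm]
        refine Finset.sum_congr rfl fun i _ => ?_
        refine Finset.sum_congr rfl fun j _ => ?_
        by_cases h : i = j
        · subst h; simp; ring
        · simp [h, Ne.symm h]; ring
      · simp [dotProduct, sq, mul_comm, Finset.mul_sum, mul_assoc, mul_left_comm]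
    rw [key]
    obtain ⟨h0, h1⟩ := hp
    obtain ⟨x, -, hx⟩ : ∃ x ∈ Finset.univ, p x ≠ 0 := by
      apply Finset.exists_ne_zero_of_sum_ne_zero
      rw [h1]; exact one_ne_zero
    have hxpos : 0 < p x := lt_of_le_of_ne (h0 x) (Ne.symm hx)
    have hn : ∀ x', 0 ≤ p x' * (∑ y, Q y x' * (z y - ∑ y', Q y' x' * z y') ^ 2) := fun x' =>
      mul_nonneg (h0 x') (Finset.sum_nonneg fun y _ => mul_nonneg (hQpos y x').le (sq_nonneg _))
    by_contra hcon
    have hA := Finset.sum_nonneg fun x' (_ : x' ∈ Finset.univ) => hn x'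
    have hA0 : ∑ x, p x * (∑ y, Q y x * (z y - ∑ y', Q y' x * z y') ^ 2) = 0 := by
      nlinarith [sq_nonneg (∑ y, Q.mulVec p y * z y)]
    have hB0 : ∑ y, Q.mulVec p y * z y = 0 := by
      have : (∑ y, Q.mulVec p y * z y) ^ 2 = 0 := by
        nlinarith [sq_nonneg (∑ y, Q.mulVec p y * z y)]
      exact pow_eq_zero_iff (two_ne_zero) |>.1 this
    have hx0 := (Finset.sum_eq_zero_iff_of_nonneg fun x' _ => hn x').1 hA0 x (Finset.mem_univ _)
    have hs0 := (mul_eq_zero.1 hx0).resolve_left hx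
    have hconst : ∀ y, z y = ∑ y', Q y' x * z y' := by
      intro y
      have := (Finset.sum_eq_zero_iff_of_nonneg
        fun y _ => mul_nonneg (hQpos y x).le (sq_nonneg _)).1 hs0 y (Finset.mem_univ _)
      have := (mul_eq_zero.1 this).resolve_left (hQpos y x).ne'
      have := pow_eq_zero_iff (two_ne_zero) |>.1 this
      linarith
    set e := ∑ y', Q y' x * z y'
    have : e = 0 := by
      have h' : ∑ y, Q.mulVec p y * z y = e := by
        rw [Finset.sum_congr rfl fun y _ => by rw [hconst y], ← Finset.sum_mul,
          sum_mulVec_eq hQcol, h1, one_mul]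
      rw [← h', hB0]
    exact hz (funext fun y => by rw [hconst y, this]; rfl)

/-! ### The matrix `V_p` and its trace -/

/-- The matrix `V_p = D_p⁻¹ - diag(p)`, the smallest asymptotic covariance of `√n (F - Φ)` at `p`. -/
def Vmat {a b : ℕ} (Q : Matrix (Fin b) (Fin a) ℝ) (p : Fin a → ℝ) : Matrix (Fin a) (Fin a) ℝ :=
  (Dmat Q p)⁻¹ - Matrix.diagonal p

section
variable {a b : ℕ} {Q : Matrix (Fin b) (Fin a) ℝ} {p : Fin a → ℝ}

theorem Dmat_symm (Q : Matrix (Fin b) (Fin a) ℝ) (p : Fin a → ℝ) : (Dmat Q p)ᵀ = Dmat Q p := by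
  simp [Dmat, Matrix.mul_assoc]

theorem Dinv_symm (Q : Matrix (Fin b) (Fin a) ℝ) (p : Fin a → ℝ) :
    ((Dmat Q p)⁻¹)ᵀ = (Dmat Q p)⁻¹ := by
  rw [Matrix.transpose_nonsing_inv, Dmat_symm]

theorem Dinv_mulVec_one (hQpos : ∀ y x, 0 < Q y x) (hQcol : ∀ x, ∑ y, Q y x = 1)
    (hrank : Q.rank = a) (hp : p ∈ simplex a) : (Dmat Q p)⁻¹ *ᵥ 1 = p := by
  have hdu : IsUnit (Dmat Q p).det := (Dmat_posDef hQpos hrank hp).det_pos.ne'.isUnit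
  rw [← Dmat_mulVec hQpos hQcol hp, mulVec_mulVec, Matrix.nonsing_inv_mul _ hdu, one_mulVec]

theorem Vmat_mulVec_one (hQpos : ∀ y x, 0 < Q y x) (hQcol : ∀ x, ∑ y, Q y x = 1)
    (hrank : Q.rank = a) (hp : p ∈ simplex a) : Vmat Q p *ᵥ 1 = 0 := by
  rw [Vmat, sub_mulVec, Dinv_mulVec_one hQpos hQcol hrank hp]
  funext i
  simp [mulVec_diagonal]

theorem Vmat_symm (Q : Matrix (Fin b) (Fin a) ℝ) (p : Fin a → ℝ) : (Vmat Q p)ᵀ = Vmat Q p := by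
  rw [Vmat, transpose_sub, Dinv_symm, diagonal_transpose]

/-- `diag(p) - diag(p) D_p diag(p)` is the expected conditional covariance of `X` given `Y`. -/
theorem condCov_posSemidef (hQpos : ∀ y x, 0 < Q y x) (hQcol : ∀ x, ∑ y, Q y x = 1)
    (hp : p ∈ simplex a) :
    (Matrix.diagonal p - Matrix.diagonal p * Dmat Q p * Matrix.diagonal p).PosSemidef := by
  refine Matrix.PosSemidef.of_dotProduct_mulVec_nonneg ?_ ?_
  · rw [Matrix.IsHermitian, conjTranspose_eq_transpose_of_trivial]
    simp [Dmat_symm, Matrix.mul_assoc]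
  · intro z
    have hr := mulVec_pos_of_simplex hQpos hp
    have e : star z ⬝ᵥ ((Matrix.diagonal p - Matrix.diagonal p * Dmat Q p * Matrix.diagonal p) *ᵥ z)
        = ∑ y, (∑ x, Q y x * p x * z x ^ 2
            - (Q.mulVec p y)⁻¹ * (∑ x, Q y x * p x * z x) ^ 2) := by
      have e1 : ∀ i, ((Matrix.diagonal p - Matrix.diagonal p * Dmat Q p * Matrix.diagonal p) *ᵥ z) i
          = p i * z i - ∑ y, p i * Q y i * (Q.mulVec p y)⁻¹ * ∑ x, Q y x * p x * z x := by
        intro i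
        rw [sub_mulVec, Pi.sub_apply, mulVec_diagonal, ← mulVec_mulVec, ← mulVec_mulVec,
          mulVec_diagonal]
        congr 1
        simp only [mulVec, dotProduct, Dmat_apply, Finset.mul_sum, Finset.sum_mul,
          diagonal_apply, ite_mul, zero_mul, Finset.sum_ite_eq,
          Finset.mem_univ, if_true]
        rw [Finset.sum_comm]
        refine Finset.sum_congr rfl fun y _ => Finset.sum_congr rfl fun x _ => ?_
        ring
      simp only [dotProduct, star_trivial, e1, mul_sub, Finset.sum_sub_distrib]
      congr 1
      · rw [Finset.sum_comm]
        refine Finset.sum_congr rfl fun x _ => ?_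
        rw [← Finset.sum_mul, ← Finset.sum_mul, hQcol]; ring
      · simp only [Finset.mul_sum]
        rw [Finset.sum_comm]
        refine Finset.sum_congr rfl fun y _ => ?_
        rw [sq, Finset.sum_mul_sum, Finset.mul_sum]
        refine Finset.sum_congr rfl fun x _ => ?_
        rw [Finset.mul_sum]
        refine Finset.sum_congr rfl fun x' _ => ?_
        ring
    rw [e]
    refine Finset.sum_nonneg fun y _ => ?_
    have hcs := Finset.sum_sq_le_sum_mul_sum_of_sq_le_mul Finset.univ
      (f := fun x => Q y x * p x) (g := fun x => Q y x * p x * z x ^ 2)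
      (r := fun x => Q y x * p x * z x)
      (fun x _ => mul_nonneg (hQpos y x).le (hp.1 x))
      (fun x _ => mul_nonneg (mul_nonneg (hQpos y x).le (hp.1 x)) (sq_nonneg _))
      (fun x _ => le_of_eq (by ring))
    have : (∑ x, Q y x * p x) = Q.mulVec p y := rfl
    rw [this] at hcs
    rw [sub_nonneg, inv_mul_le_iff₀ (hr y)]
    exact hcs

/-- With `P = diag(p)`, `V_p = (P - P D P) + (1 - P D) D⁻¹ (1 - P D)ᵀ`. -/
theorem Vmat_posSemidef (hQpos : ∀ y x, 0 < Q y x) (hQcol : ∀ x, ∑ y, Q y x = 1)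
    (hrank : Q.rank = a) (hp : p ∈ simplex a) : (Vmat Q p).PosSemidef := by
  have hD := Dmat_posDef hQpos hrank hp
  have hdu : IsUnit (Dmat Q p).det := hD.det_pos.ne'.isUnit
  have h1 := condCov_posSemidef hQpos hQcol hp
  have h2 := hD.inv.posSemidef.mul_mul_conjTranspose_same (1 - Matrix.diagonal p * Dmat Q p)
  have h := h1.add h2
  convert h using 1
  rw [conjTranspose_eq_transpose_of_trivial, transpose_sub, transpose_mul, Dmat_symm,
    diagonal_transpose, transpose_one, Vmat]
  rw [Matrix.sub_mul, Matrix.mul_assoc (diagonal p) _ (Dmat Q p)⁻¹, Matrix.mul_nonsing_inv _ hdu, Matrix.one_mul,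
    Matrix.mul_one, Matrix.sub_mul, Matrix.mul_sub, ← Matrix.mul_assoc,
    Matrix.nonsing_inv_mul _ hdu, Matrix.mul_one, Matrix.one_mul, Matrix.mul_sub, Matrix.mul_one,
    Matrix.mul_assoc]
  abel
end

theorem prod_le_mean_pow {ι : Type*} [Fintype ι] (hι : 0 < Fintype.card ι) (z : ι → ℝ)
    (hz : ∀ i, 0 ≤ z i) :
    ∏ i, z i ≤ ((∑ i, z i) / Fintype.card ι) ^ Fintype.card ι := by
  have h := Real.geom_mean_le_arith_mean Finset.univ (fun _ => (1 : ℝ)) z (by simp)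
    (by simpa using hι) (fun i _ => hz i)
  simp only [Real.rpow_one, one_mul, Finset.sum_const, Finset.card_univ, nsmul_eq_mul,
    mul_one] at h
  have h0 : 0 ≤ ∏ i, z i := Finset.prod_nonneg fun i _ => hz i
  have hpow := pow_le_pow_left₀ (Real.rpow_nonneg h0 _) h (Fintype.card ι)
  rwa [Real.rpow_inv_natCast_pow h0 hι.ne'] at hpow

/-- AM-GM for a positive semidefinite matrix annihilated by the all-ones vector `𝟙`, applied to the
eigenvalues of `V + t 𝟙𝟙ᵀ` with `t = tr V / (a (a - 1))`. -/
theorem trace_ge_of_posSemidef {a : ℕ} (ha : 2 ≤ a) (V : Matrix (Fin a) (Fin a) ℝ)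
    (hV : V.PosSemidef) (h1 : V *ᵥ 1 = 0) (p : Fin a → ℝ) (hp : ∑ i, p i = 1)
    (hw : 0 < (V + vecMulVec p p).det) :
    (a : ℝ) * Real.exp (Real.log (V + vecMulVec p p).det / ((a : ℝ) - 1)) ≤ V.trace := by
  set w := (V + vecMulVec p p).det with hwdef
  have hsymm : Vᵀ = V := by
    rw [← conjTranspose_eq_transpose_of_trivial]; exact hV.isHermitian
  have h2 : 1 ᵥ* V = 0 := by rw [← mulVec_transpose, hsymm, h1]
  have haR : (2 : ℝ) ≤ a := by exact_mod_cast ha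
  have key : ∀ t : ℝ, 0 ≤ t → t * a ^ 2 * w ≤ (V.trace / a + t) ^ a := by
    intro t ht
    have hX : (V + vecMulVec (fun _ => √t) (fun _ => √t)).PosSemidef :=
      hV.add (by simpa using posSemidef_vecMulVec_self_star (fun _ : Fin a => √t))
    have hdet := det_add_vecMulVec_eq V h1 h2 p (fun _ => √t) hp
    have hle := prod_le_mean_pow (by simpa using (by omega : 0 < a)) hX.isHermitian.eigenvalues
      (fun i => hX.eigenvalues_nonneg i)
    have e1 := hX.isHermitian.det_eq_prod_eigenvalues
    have e2 := hX.isHermitian.trace_eq_sum_eigenvalues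
    simp only [RCLike.ofReal_real_eq_id, id] at e1 e2
    rw [← e1, ← e2, hdet, Fintype.card_fin] at hle
    have e3 : (V + vecMulVec (fun _ => √t) (fun _ => √t)).trace = V.trace + a * t := by
      simp [Matrix.trace, vecMulVec_apply, Real.mul_self_sqrt ht, Finset.sum_add_distrib]
    rw [e3] at hle
    simp only [Finset.sum_const, Finset.card_univ, Fintype.card_fin, nsmul_eq_mul, mul_pow,
      Real.sq_sqrt ht] at hle
    calc t * a ^ 2 * w = a ^ 2 * t * w := by ring
      _ ≤ _ := hle
      _ = _ := by congr 1; field_simp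
  have hT0 : 0 ≤ V.trace := hV.trace_nonneg
  obtain ⟨m, rfl⟩ : ∃ m, a = m + 1 := ⟨a - 1, by omega⟩
  have hm : 1 ≤ m := by omega
  have hmR : (1 : ℝ) ≤ m := by exact_mod_cast hm
  push_cast at *
  have hT : 0 < V.trace := by
    rcases hT0.lt_or_eq with h | h
    · exact h
    exfalso
    have ht0 : 0 < min 1 w := lt_min one_pos hw
    have hk := key (min 1 w) ht0.le
    rw [← h, zero_div, zero_add, pow_succ] at hk
    have hp1 : (min 1 w) ^ m ≤ w :=
      (pow_le_of_le_one ht0.le (min_le_left _ _) (by omega)).trans (min_le_right _ _)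
    have : min 1 w * ((m : ℝ) + 1) ^ 2 * w ≤ w * min 1 w :=
      hk.trans (mul_le_mul_of_nonneg_right hp1 ht0.le)
    have h4 : (4 : ℝ) ≤ ((m : ℝ) + 1) ^ 2 := by nlinarith
    have hpos : 0 < w * min 1 w := mul_pos hw ht0
    nlinarith
  set T := V.trace with hTdef
  have hk := key (T / ((m + 1) * m)) (by positivity)
  have e1 : T / ((m : ℝ) + 1) + T / ((m + 1) * m) = T / m := by field_simp
  rw [e1, pow_succ] at hk
  have hk2 : ((m : ℝ) + 1) * w ≤ (T / m) ^ m := by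
    have hTm : 0 < T / m := by positivity
    refine le_of_mul_le_mul_right (le_trans (le_of_eq ?_) hk) hTm
    field_simp
  have hbern : 1 / ((m : ℝ) + 1) ≤ ((m : ℝ) / (m + 1)) ^ m := by
    have h := one_add_mul_le_pow (a := -1 / ((m : ℝ) + 1))
      (by rw [le_div_iff₀ (by positivity)]; linarith) m
    calc 1 / ((m : ℝ) + 1) = 1 + m * (-1 / ((m : ℝ) + 1)) := by field_simp; ring
      _ ≤ _ := h
      _ = _ := by congr 1; field_simp; ring
  have hk3 : w ≤ (T / ((m : ℝ) + 1)) ^ m := by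
    calc w = (((m : ℝ) + 1) * w) * (1 / ((m : ℝ) + 1)) := by field_simp
      _ ≤ (T / m) ^ m * ((m : ℝ) / (m + 1)) ^ m :=
          mul_le_mul hk2 hbern (by positivity) (by positivity)
      _ = _ := by rw [← mul_pow]; congr 1; field_simp
  have hlog : Real.log w ≤ m * Real.log (T / ((m : ℝ) + 1)) := by
    rw [← Real.log_pow]; exact Real.log_le_log hw hk3
  have hfin : Real.exp (Real.log w / ((m : ℝ) + 1 - 1)) ≤ T / ((m : ℝ) + 1) := by
    rw [← Real.le_log_iff_exp_le (by positivity), add_sub_cancel_right, div_le_iff₀ (by positivity)]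
    linarith
  rw [le_div_iff₀ (by positivity)] at hfin
  linarith

/-- The AM-GM bound on `tr V_p`, with `det (V_p + p pᵀ)` expressed through `G_p` and `D_p`. -/
theorem trace_Vmat_ge {a b : ℕ} (ha : 2 ≤ a) (hb : 2 ≤ b) {Q : Matrix (Fin b) (Fin a) ℝ}
    (hQpos : ∀ y x, 0 < Q y x) (hQcol : ∀ x, ∑ y, Q y x = 1) (hrank : Q.rank = a)
    {p : Fin a → ℝ} (hp : p ∈ simplex a) :
    (a : ℝ) * Real.exp ((Real.log (Gmat Q p).det - ∑ y, Real.log (Q.mulVec p y)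
      - Real.log (Dmat Q p).det) / ((a : ℝ) - 1)) ≤ (Vmat Q p).trace := by
  have hr := mulVec_pos_of_simplex hQpos hp
  have hD := (Dmat_posDef hQpos hrank hp).det_pos
  have hG := det_Gmat_pos hb hQpos hQcol hp
  have hid := det_Gmat_eq_mul hb hQpos hQcol hrank hp
  have hprod : 0 < ∏ y, Q.mulVec p y := Finset.prod_pos fun y _ => hr y
  have hw : 0 < (Vmat Q p + vecMulVec p p).det := by
    rw [hid] at hG
    exact (mul_pos_iff_of_pos_left (mul_pos hprod hD)).1 hG
  have := trace_ge_of_posSemidef ha (Vmat Q p) (Vmat_posSemidef hQpos hQcol hrank hp)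
    (Vmat_mulVec_one hQpos hQcol hrank hp) p hp.2 hw
  convert this using 4
  rw [hid, ← Real.log_prod fun y _ => (hr y).ne']
  change Real.log (_ * (Vmat Q p + vecMulVec p p).det) - _ - _ = _
  rw [Real.log_mul (mul_pos hprod hD).ne' hw.ne', Real.log_mul hprod.ne' hD.ne']
  ring

/-! ### Moments of additive statistics under product weights -/

theorem sum_pi_succ {ι : Type*} [Fintype ι] {n : ℕ} (g : (Fin (n + 1) → ι) → ℝ) :
    ∑ z, g z = ∑ t, ∑ z : Fin n → ι, g (Fin.cons t z) := by
  rw [← Fintype.sum_prod_type']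
  exact (Fintype.sum_equiv (Fin.consEquiv fun _ : Fin (n + 1) => ι) _ _ fun _ => rfl).symm

theorem sum_pi_prod {ι : Type*} [Fintype ι] {n : ℕ} (k : Fin n → ι → ℝ) :
    ∑ z : Fin n → ι, ∏ i, k i (z i) = ∏ i, ∑ t, k i t := by
  classical
  rw [Finset.prod_univ_sum]
  simp

/-- First moment of an additive statistic under an (unnormalised) product weight. -/
theorem sum_pi_prod_mul_sum {ι : Type*} [Fintype ι] {n : ℕ} (k c : Fin n → ι → ℝ)
    (hk : ∀ i, ∑ t, k i t ≠ 0) :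
    ∑ z : Fin n → ι, (∏ i, k i (z i)) * ∑ i, c i (z i)
      = (∏ i, ∑ t, k i t) * ∑ i, (∑ t, k i t * c i t) / ∑ t, k i t := by
  induction n with
  | zero => simp
  | succ n ih =>
    have ih' := ih (fun i => k i.succ) (fun i => c i.succ) (fun i => hk i.succ)
    have h0 := sum_pi_prod (fun i : Fin n => k i.succ)
    have e : ∀ (t : ι), ∑ z : Fin n → ι, (∏ i, k i ((Fin.cons t z : Fin (n + 1) → ι) i)) *
          ∑ i, c i ((Fin.cons t z : Fin (n + 1) → ι) i)
        = (k 0 t * c 0 t) * (∏ i : Fin n, ∑ t, k i.succ t) + k 0 t *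
          ((∏ i : Fin n, ∑ t, k i.succ t) *
            ∑ i : Fin n, (∑ t, k i.succ t * c i.succ t) / ∑ t, k i.succ t) := by
      intro t
      rw [← ih', ← h0, Finset.mul_sum, Finset.mul_sum, ← Finset.sum_add_distrib]
      refine Finset.sum_congr rfl fun z _ => ?_
      simp only [Fin.prod_univ_succ, Fin.sum_univ_succ, Fin.cons_zero, Fin.cons_succ]
      ring
    rw [sum_pi_succ, Finset.sum_congr rfl fun t _ => e t, Finset.sum_add_distrib,
      ← Finset.sum_mul, ← Finset.sum_mul, Fin.prod_univ_succ, Fin.sum_univ_succ]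
    have := hk 0
    field_simp

theorem sum_pi_prod_mul_sum_of_prob {ι : Type*} [Fintype ι] {n : ℕ} (ρ c : ι → ℝ)
    (hρ : ∑ t, ρ t = 1) :
    ∑ z : Fin n → ι, (∏ i, ρ (z i)) * ∑ i, c (z i) = n * ∑ t, ρ t * c t := by
  have h := sum_pi_prod_mul_sum (n := n) (fun _ => ρ) (fun _ => c) (by simp [hρ])
  simpa [hρ] using h

/-- Second moment of two additive statistics under a product probability, one of them centred. -/
theorem sum_pi_prod_mul_sum_mul_sum {ι : Type*} [Fintype ι] {n : ℕ} (ρ c d : ι → ℝ)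
    (hρ : ∑ t, ρ t = 1) (hd : ∑ t, ρ t * d t = 0) :
    ∑ z : Fin n → ι, (∏ i, ρ (z i)) * ((∑ i, c (z i)) * ∑ i, d (z i))
      = n * ∑ t, ρ t * (c t * d t) := by
  induction n with
  | zero => simp
  | succ n ih =>
    have h0 := sum_pi_prod (fun _ : Fin n => ρ)
    have hc := sum_pi_prod_mul_sum_of_prob (n := n) ρ c hρ
    have hd' := sum_pi_prod_mul_sum_of_prob (n := n) ρ d hρ
    rw [hd, mul_zero] at hd'
    simp only [hρ, Finset.prod_const_one] at h0
    have e : ∀ (t : ι), ∑ z : Fin n → ι, (∏ i, ρ ((Fin.cons t z : Fin (n + 1) → ι) i)) *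
          ((∑ i, c ((Fin.cons t z : Fin (n + 1) → ι) i)) *
            ∑ i, d ((Fin.cons t z : Fin (n + 1) → ι) i))
        = ρ t * (c t * d t) * 1 + (ρ t * c t) * 0 + (ρ t * d t) * (n * ∑ t, ρ t * c t)
          + ρ t * (n * ∑ t, ρ t * (c t * d t)) := by
      intro t
      rw [← ih, ← hc, ← hd', ← h0]
      simp only [Finset.mul_sum (s := (Finset.univ : Finset (Fin n → ι))),
        ← Finset.sum_add_distrib]
      refine Finset.sum_congr rfl fun z _ => ?_
      simp only [Fin.prod_univ_succ, Fin.sum_univ_succ, Fin.cons_zero, Fin.cons_succ]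
      ring
    rw [sum_pi_succ, Finset.sum_congr rfl fun t _ => e t]
    simp only [Finset.sum_add_distrib, ← Finset.sum_mul, hd, hρ]
    push_cast
    ring

/-- A double sum over data vectors and output vectors is a sum over vectors of pairs. -/
theorem sum_sum_eq_sum_pi_prod {a b n : ℕ} (g : (Fin n → Fin a) → (Fin n → Fin b) → ℝ) :
    ∑ xv : Fin n → Fin a, ∑ y : Fin n → Fin b, g xv y
      = ∑ z : Fin n → Fin a × Fin b, g (fun i => (z i).1) (fun i => (z i).2) := by
  rw [← Fintype.sum_prod_type']
  exact (Fintype.sum_equiv (Equiv.arrowProdEquivProdArrow (Fin n) (fun _ => Fin a)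
    (fun _ => Fin b)) _ _ fun _ => rfl).symm

/-! ### Risk bounds for a fixed distribution `p` -/

/-- The joint probability of `(x⃗, y⃗)` given `p`. -/
def jwt {a b n : ℕ} (Q : Matrix (Fin b) (Fin a) ℝ) (p : Fin a → ℝ)
    (xv : Fin n → Fin a) (y : Fin n → Fin b) : ℝ :=
  ∏ i, p (xv i) * Q (y i) (xv i)

theorem jwt_nonneg {a b n : ℕ} {Q : Matrix (Fin b) (Fin a) ℝ} (hQpos : ∀ y x, 0 < Q y x)
    {p : Fin a → ℝ} (hp : p ∈ simplex a) (xv : Fin n → Fin a) (y : Fin n → Fin b) :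
    0 ≤ jwt Q p xv y :=
  Finset.prod_nonneg fun _ _ => mul_nonneg (hp.1 _) (hQpos _ _).le

theorem freqVec_eq {a n : ℕ} (xv : Fin n → Fin a) (α : Fin a) :
    freqVec xv α = (∑ i, if xv i = α then (1 : ℝ) else 0) / n := by
  simp [freqVec]

section
variable {a b n : ℕ} {Q : Matrix (Fin b) (Fin a) ℝ} {p : Fin a → ℝ}

theorem sum_joint (hQcol : ∀ x, ∑ y, Q y x = 1) (hp : p ∈ simplex a) :
    ∑ t : Fin a × Fin b, p t.1 * Q t.2 t.1 = 1 := by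
  rw [Fintype.sum_prod_type]
  simp [← Finset.mul_sum, hQcol, hp.2]

theorem sum_joint_mul (g : Fin a → Fin b → ℝ) :
    ∑ t : Fin a × Fin b, p t.1 * Q t.2 t.1 * g t.1 t.2 = ∑ y, ∑ x, p x * Q y x * g x y := by
  rw [Fintype.sum_prod_type, Finset.sum_comm]

theorem sum_jwt (hQcol : ∀ x, ∑ y, Q y x = 1) (hp : p ∈ simplex a) :
    ∑ xv : Fin n → Fin a, ∑ y : Fin n → Fin b, jwt Q p xv y = 1 := by
  rw [sum_sum_eq_sum_pi_prod]
  simp only [jwt]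
  rw [sum_pi_prod (fun (_ : Fin n) (t : Fin a × Fin b) => p t.1 * Q t.2 t.1)]
  simp [sum_joint hQcol hp]

/-- Conditional first moment given the output vector `y⃗`. -/
theorem sum_jwt_mul_sum (hQpos : ∀ y x, 0 < Q y x) (hp : p ∈ simplex a) (α : Fin a)
    (s : Fin b → ℝ) (y : Fin n → Fin b) :
    ∑ xv : Fin n → Fin a, jwt Q p xv y * ∑ i, ((if xv i = α then (1 : ℝ) else 0) - s (y i))
      = lik Q y p * ∑ i, (p α * Q (y i) α / Q.mulVec p (y i) - s (y i)) := by
  have hr := mulVec_pos_of_simplex hQpos hp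
  have hs : ∀ y, ∑ t, p t * Q y t = Q.mulVec p y := fun y => by
    simp [mulVec, dotProduct, mul_comm]
  have h := sum_pi_prod_mul_sum (n := n) (fun i t => p t * Q (y i) t)
    (fun i t => (if t = α then (1 : ℝ) else 0) - s (y i)) (fun i => by
      rw [hs]; exact (hr _).ne')
  simp only [jwt, lik]
  rw [h]
  simp only [hs]
  congr 1
  refine Finset.sum_congr rfl fun i _ => ?_
  have : ∑ t, p t * Q (y i) t * ((if t = α then (1 : ℝ) else 0) - s (y i))
      = p α * Q (y i) α - Q.mulVec p (y i) * s (y i) := by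
    simp only [mul_sub, Finset.sum_sub_distrib, ← Finset.sum_mul, hs]
    simp
  rw [this, sub_div, mul_div_cancel_left₀ _ (hr _).ne']

theorem sum_jwt_eq_lik (y : Fin n → Fin b) :
    ∑ xv : Fin n → Fin a, jwt Q p xv y = lik Q y p := by
  simp only [jwt, lik]
  rw [sum_pi_prod (fun i t => p t * Q (y i) t)]
  simp [mulVec, dotProduct, mul_comm]

/-- Pointwise (fixed `p`) quadratic lower bound on the risk of an estimator `Φ` of the frequency of
`α`, from testing the error against the statistic `h ∑ᵢ (1[xᵢ = α] - s(yᵢ)) + ρ`. -/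
theorem risk_lower_bound (hQpos : ∀ y x, 0 < Q y x) (hQcol : ∀ x, ∑ y, Q y x = 1)
    (hp : p ∈ simplex a) (hn : 0 < n) (α : Fin a) (s : Fin b → ℝ)
    (hs : ∑ y, Q.mulVec p y * s y = p α) (h ρ : ℝ) (Φ : (Fin n → Fin b) → ℝ) :
    h ^ 2 * (p α - ∑ y, Q.mulVec p y * s y ^ 2) + 2 * (h * ρ * p α) - ρ ^ 2 / n
      - 2 * ∑ y : Fin n → Fin b, Φ y * (lik Q y p *
        (h ^ 2 * ∑ i, (p α * Q (y i) α / Q.mulVec p (y i) - s (y i)) + h * ρ))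
    ≤ n * (h ^ 2 * ∑ xv : Fin n → Fin a, ∑ y : Fin n → Fin b,
        jwt Q p xv y * (freqVec xv α - Φ y) ^ 2) := by
  have hnR : (0 : ℝ) < n := by exact_mod_cast hn
  have hrs : ∀ y, ∑ t, p t * Q y t = Q.mulVec p y := fun y => by
    simp [mulVec, dotProduct, mul_comm]
  -- single-sample statistics
  let σ : Fin a × Fin b → ℝ := fun t => (if t.1 = α then (1 : ℝ) else 0) - s t.2
  let ind : Fin a × Fin b → ℝ := fun t => if t.1 = α then (1 : ℝ) else 0
  let w : Fin a × Fin b → ℝ := fun t => p t.1 * Q t.2 t.1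
  have hw1 : ∑ t, w t = 1 := sum_joint hQcol hp
  have hα : ∑ y, p α * Q y α = p α := by rw [← Finset.mul_sum, hQcol, mul_one]
  have hwind : ∑ t, w t * ind t = p α := by
    have := sum_joint_mul (Q := Q) (p := p) (fun x _ => if x = α then (1 : ℝ) else 0)
    simp only [w, ind]
    rw [this]
    simpa using hα
  have hwσ : ∑ t, w t * σ t = 0 := by
    have := sum_joint_mul (Q := Q) (p := p) (fun x y => (if x = α then (1 : ℝ) else 0) - s y)
    simp only [w, σ]
    rw [this]
    simp only [mul_sub, Finset.sum_sub_distrib, ← Finset.sum_mul, hrs]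
    simp [hα, hs]
  set κ := ∑ y, p α * Q y α * s y with hκ
  have hwindσ : ∑ t, w t * (ind t * σ t) = p α - κ := by
    have := sum_joint_mul (Q := Q) (p := p)
      (fun x y => (if x = α then (1 : ℝ) else 0) * ((if x = α then (1 : ℝ) else 0) - s y))
    simp only [w, σ, ind]
    rw [this]
    simp only [ite_mul, one_mul, zero_mul, mul_ite, mul_zero, Finset.sum_ite_eq',
      Finset.mem_univ, if_true, mul_sub, Finset.sum_sub_distrib]
    simp [hα, hκ]
  have hwσσ : ∑ t, w t * (σ t * σ t) = p α - 2 * κ + ∑ y, Q.mulVec p y * s y ^ 2 := by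
    have := sum_joint_mul (Q := Q) (p := p)
      (fun x y => (if x = α then (1 : ℝ) - 2 * s y else 0) + s y ^ 2)
    have e : ∀ t, w t * (σ t * σ t)
        = p t.1 * Q t.2 t.1 * ((if t.1 = α then (1 : ℝ) - 2 * s t.2 else 0) + s t.2 ^ 2) := by
      intro t
      simp only [w, σ]
      split_ifs <;> ring
    rw [Finset.sum_congr rfl fun t _ => e t, this]
    simp only [mul_add, Finset.sum_add_distrib, ← Finset.sum_mul, hrs]
    congr 1
    simp only [mul_ite, mul_zero, Finset.sum_ite_eq', Finset.mem_univ, if_true, mul_sub,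
      Finset.sum_sub_distrib, mul_one, hα, hκ, Finset.mul_sum]
    congr 1
    exact Finset.sum_congr rfl fun y _ => by ring
  -- sums over samples
  let S : (Fin n → Fin a) → (Fin n → Fin b) → ℝ := fun xv y =>
    ∑ i, ((if xv i = α then (1 : ℝ) else 0) - s (y i))
  have m1 : ∑ xv : Fin n → Fin a, ∑ y : Fin n → Fin b, jwt Q p xv y = 1 := sum_jwt hQcol hp
  have mS : ∑ xv : Fin n → Fin a, ∑ y : Fin n → Fin b, jwt Q p xv y * S xv y = 0 := by
    rw [sum_sum_eq_sum_pi_prod]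
    have := sum_pi_prod_mul_sum_of_prob (n := n) w σ hw1
    rw [hwσ, mul_zero] at this
    exact this
  have mSS : ∑ xv : Fin n → Fin a, ∑ y : Fin n → Fin b, jwt Q p xv y * (S xv y * S xv y)
      = n * (p α - 2 * κ + ∑ y, Q.mulVec p y * s y ^ 2) := by
    rw [sum_sum_eq_sum_pi_prod, ← hwσσ]
    exact sum_pi_prod_mul_sum_mul_sum (n := n) w σ σ hw1 hwσ
  have mF : ∑ xv : Fin n → Fin a, ∑ y : Fin n → Fin b,
      jwt Q p xv y * (n * freqVec xv α) = n * p α := by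
    rw [sum_sum_eq_sum_pi_prod, ← hwind]
    have := sum_pi_prod_mul_sum_of_prob (n := n) w ind hw1
    rw [← this]
    refine Finset.sum_congr rfl fun z _ => ?_
    rw [freqVec_eq, mul_div_cancel₀ _ hnR.ne']
    rfl
  have mFS : ∑ xv : Fin n → Fin a, ∑ y : Fin n → Fin b,
      jwt Q p xv y * (n * freqVec xv α * S xv y) = n * (p α - κ) := by
    rw [sum_sum_eq_sum_pi_prod, ← hwindσ]
    have := sum_pi_prod_mul_sum_mul_sum (n := n) w ind σ hw1 hwσ
    rw [← this]
    refine Finset.sum_congr rfl fun z _ => ?_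
    rw [freqVec_eq, mul_div_cancel₀ _ hnR.ne']
    rfl
  have mΦ : ∑ xv : Fin n → Fin a, ∑ y : Fin n → Fin b,
      jwt Q p xv y * (Φ y * (h ^ 2 * S xv y + h * ρ))
      = ∑ y : Fin n → Fin b, Φ y * (lik Q y p *
        (h ^ 2 * ∑ i, (p α * Q (y i) α / Q.mulVec p (y i) - s (y i)) + h * ρ)) := by
    rw [Finset.sum_comm]
    refine Finset.sum_congr rfl fun y _ => ?_
    have e1 := sum_jwt_mul_sum (n := n) hQpos hp α s y
    have e2 := sum_jwt_eq_lik (Q := Q) (p := p) y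
    have : ∀ xv : Fin n → Fin a, jwt Q p xv y * (Φ y * (h ^ 2 * S xv y + h * ρ))
        = Φ y * h ^ 2 * (jwt Q p xv y * S xv y) + Φ y * (h * ρ) * jwt Q p xv y := by
      intro xv; ring
    simp only [this, Finset.sum_add_distrib, ← Finset.mul_sum, e2]
    simp only [S, e1]
    ring
  have hpt : ∀ (xv : Fin n → Fin a) (y : Fin n → Fin b),
      (2 * h ^ 2 / n) * (jwt Q p xv y * (n * freqVec xv α * S xv y))
      + (2 * h * ρ / n) * (jwt Q p xv y * (n * freqVec xv α))
      - 2 * (jwt Q p xv y * (Φ y * (h ^ 2 * S xv y + h * ρ)))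
      - (h ^ 2 / n) * (jwt Q p xv y * (S xv y * S xv y))
      - (2 * h * ρ / n) * (jwt Q p xv y * S xv y) - ρ ^ 2 / n * jwt Q p xv y
      ≤ n * h ^ 2 * (jwt Q p xv y * (freqVec xv α - Φ y) ^ 2) := by
    intro xv y
    have hj := jwt_nonneg hQpos hp xv y
    have hsq : 0 ≤ jwt Q p xv y *
        (n * (h * (freqVec xv α - Φ y) - (h * S xv y + ρ) / n) ^ 2) := by positivity
    rw [← sub_nonneg]
    convert hsq using 1
    field_simp
    ring
  have htot := Finset.sum_le_sum fun xv (_ : xv ∈ (Finset.univ : Finset (Fin n → Fin a))) =>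
    Finset.sum_le_sum fun y (_ : y ∈ (Finset.univ : Finset (Fin n → Fin b))) => hpt xv y
  simp only [Finset.sum_add_distrib, Finset.sum_sub_distrib, ← Finset.mul_sum] at htot
  rw [m1, mS, mSS, mF, mFS, mΦ] at htot
  refine le_trans (le_of_eq ?_) (htot.trans (le_of_eq (mul_assoc _ _ _)))
  field_simp
  ring

/-- The pointwise risk of an unbiased linear estimator: if `B` is a left inverse of `Q`, the
estimator `n⁻¹ ∑ᵢ B α (yᵢ)` has risk of order `1/n`. -/
theorem risk_upper_bound (hQcol : ∀ x, ∑ y, Q y x = 1)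
    (hp : p ∈ simplex a) (hn : 0 < n) (α : Fin a) (B : Fin b → ℝ)
    (hB : ∀ x, ∑ y, Q y x * B y = if x = α then 1 else 0) :
    n * (∑ xv : Fin n → Fin a, ∑ y : Fin n → Fin b,
        jwt Q p xv y * (freqVec xv α - (∑ i, B (y i)) / n) ^ 2)
      = ∑ t : Fin a × Fin b, p t.1 * Q t.2 t.1 *
          (((if t.1 = α then (1 : ℝ) else 0) - B t.2) * ((if t.1 = α then (1 : ℝ) else 0) - B t.2))
      := by
  have hnR : (0 : ℝ) < n := by exact_mod_cast hn
  have hd : ∑ t : Fin a × Fin b, p t.1 * Q t.2 t.1 *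
      ((if t.1 = α then (1 : ℝ) else 0) - B t.2) = 0 := by
    rw [Fintype.sum_prod_type]
    refine Finset.sum_eq_zero fun x _ => ?_
    simp only [mul_assoc, ← Finset.mul_sum]
    simp only [mul_sub, Finset.sum_sub_distrib, hB]
    by_cases hx : x = α <;> simp [hx, hQcol]
  have h := sum_pi_prod_mul_sum_mul_sum (n := n) (fun t : Fin a × Fin b => p t.1 * Q t.2 t.1)
    (fun t => (if t.1 = α then (1 : ℝ) else 0) - B t.2)
    (fun t => (if t.1 = α then (1 : ℝ) else 0) - B t.2) (sum_joint hQcol hp) hd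
  have e : ∑ xv : Fin n → Fin a, ∑ y : Fin n → Fin b,
        jwt Q p xv y * (freqVec xv α - (∑ i, B (y i)) / n) ^ 2
      = (1 / (n : ℝ) ^ 2) * ∑ z : Fin n → Fin a × Fin b, (∏ i, p (z i).1 * Q (z i).2 (z i).1) *
        ((∑ i, ((if (z i).1 = α then (1 : ℝ) else 0) - B (z i).2)) *
          ∑ i, ((if (z i).1 = α then (1 : ℝ) else 0) - B (z i).2)) := by
    rw [sum_sum_eq_sum_pi_prod, Finset.mul_sum]
    refine Finset.sum_congr rfl fun z _ => ?_
    rw [freqVec_eq, Finset.sum_sub_distrib, jwt]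
    field_simp
  rw [e, h]
  field_simp
end

/-! ### Passing to the coordinates of `Δ` -/

theorem isCompact_simplex (a : ℕ) : IsCompact (simplex a) :=
  isCompact_stdSimplex ℝ (Fin a)

theorem isClosed_stdCorner (m : ℕ) : IsClosed (stdCorner m) := by
  have : stdCorner m = (⋂ i, {q | 0 ≤ q i}) ∩ {q | ∑ i, q i ≤ 1} := by
    ext q; simp [stdCorner]
  rw [this]
  refine (isClosed_iInter fun i => ?_).inter ?_
  · exact isClosed_le continuous_const (continuous_apply i)
  · exact isClosed_le (continuous_finsetSum _ fun i _ => continuous_apply i) continuous_const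

theorem isCompact_stdCorner (m : ℕ) : IsCompact (stdCorner m) := by
  refine isCompact_Icc.of_isClosed_subset (isClosed_stdCorner m)
    (fun q hq => ?_ : stdCorner m ⊆ Set.Icc (0 : Fin m → ℝ) 1)
  refine ⟨fun i => hq.1 i, fun i => ?_⟩
  exact (Finset.single_le_sum (fun j _ => hq.1 j) (Finset.mem_univ i)).trans hq.2

theorem convex_stdCorner (m : ℕ) : Convex ℝ (stdCorner m) := by
  intro x hx y hy s t hs ht hst
  refine ⟨fun i => ?_, ?_⟩
  · have := hx.1 i; have := hy.1 i
    simp only [Pi.add_apply, Pi.smul_apply, smul_eq_mul]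
    positivity
  · simp only [Pi.add_apply, Pi.smul_apply, smul_eq_mul, Finset.sum_add_distrib, ← Finset.mul_sum]
    nlinarith [hx.2, hy.2]

theorem sum_emb {a : ℕ} (ha : 1 ≤ a) (q : Fin (a - 1) → ℝ) : ∑ x, emb a q x = 1 := by
  obtain ⟨m, rfl⟩ : ∃ m, a = m + 1 := ⟨a - 1, by omega⟩
  rw [Fin.sum_univ_castSucc]
  have h1 : ∀ i : Fin m, emb (m + 1) q i.castSucc = q i := fun i => by
    have : ((i.castSucc : Fin (m + 1)) : ℕ) < m + 1 - 1 := by simp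
    rw [emb, dif_pos this]; rfl
  have h2 : emb (m + 1) q (Fin.last m) = 1 - ∑ i, q i := by
    rw [emb, dif_neg (by simp)]
  rw [h2, Finset.sum_congr rfl fun i _ => h1 i]
  exact add_sub_cancel _ _

theorem emb_mem_simplex {a : ℕ} (ha : 1 ≤ a) {q : Fin (a - 1) → ℝ} (hq : q ∈ stdCorner (a - 1)) :
    emb a q ∈ simplex a := by
  refine ⟨fun x => ?_, sum_emb ha q⟩
  rw [emb]
  split_ifs with h
  · exact hq.1 _
  · linarith [hq.2]

theorem continuous_emb (a : ℕ) : Continuous (emb a) := by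
  refine continuous_pi fun x => ?_
  by_cases h : (x : ℕ) < a - 1
  · simp only [emb, dif_pos h]; fun_prop
  · simp only [emb, dif_neg h]; fun_prop

theorem continuousOn_comp_emb {a : ℕ} (ha : 1 ≤ a) {g : (Fin a → ℝ) → ℝ}
    (hg : ContinuousOn g (simplex a)) :
    ContinuousOn (fun q => g (emb a q)) (stdCorner (a - 1)) :=
  hg.comp (continuous_emb a).continuousOn fun _ hq => emb_mem_simplex ha hq

theorem integrableOn_stdCorner {m : ℕ} {g : (Fin m → ℝ) → ℝ}
    (hg : ContinuousOn g (stdCorner m)) : IntegrableOn g (stdCorner m) :=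
  hg.integrableOn_compact (isCompact_stdCorner m)

section
variable {a : ℕ} {μ : Measure (Fin a → ℝ)} [IsProbabilityMeasure μ]
  {f : (Fin (a - 1) → ℝ) → ℝ}

theorem measure_simplex_compl (ha : 1 ≤ a) (hf : IsContDensity μ f) : μ (simplex a)ᶜ = 0 := by
  have hms : MeasurableSet (simplex a)ᶜ := (isCompact_simplex a).isClosed.measurableSet.compl
  have h := hf.2.2.2 ((simplex a)ᶜ.indicator 1) (measurable_one.indicator hms)
    ⟨1, fun p => by by_cases hp : p ∈ (simplex a)ᶜ <;> simp [Set.indicator, hp]⟩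
  rw [integral_indicator_one hms,
    setIntegral_congr_fun (g := fun _ => (0 : ℝ)) (isClosed_stdCorner _).measurableSet] at h
  · simpa [measureReal_eq_zero_iff] using h
  · intro q hq
    simp [Set.indicator, emb_mem_simplex ha hq]

theorem ae_mem_simplex (ha : 1 ≤ a) (hf : IsContDensity μ f) : ∀ᵐ p ∂μ, p ∈ simplex a :=
  measure_simplex_compl ha hf

/-- Integration against `μ` in the coordinates of `Δ`, for integrands continuous on the simplex. -/
theorem integral_eq_stdCorner (ha : 1 ≤ a) (hf : IsContDensity μ f) {g : (Fin a → ℝ) → ℝ}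
    (hg : ContinuousOn g (simplex a)) :
    ∫ p, g p ∂μ = ∫ q in stdCorner (a - 1), g (emb a q) * f q := by
  classical
  have hms : MeasurableSet (simplex a) := (isCompact_simplex a).isClosed.measurableSet
  have hmeas : Measurable ((simplex a).piecewise g 0) :=
    hg.measurable_piecewise continuousOn_const hms
  obtain ⟨C, hC⟩ := (isCompact_simplex a).exists_bound_of_continuousOn hg
  have h := hf.2.2.2 _ hmeas ⟨max C 0, fun p => by
    by_cases hp : p ∈ simplex a
    · simp only [Set.piecewise, hp, if_true]
      exact (hC p hp).trans (le_max_left _ _)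
    · simp [Set.piecewise, hp]⟩
  rw [integral_congr_ae (g := (simplex a).piecewise g 0), h]
  · refine setIntegral_congr_fun (isClosed_stdCorner _).measurableSet fun q hq => ?_
    simp [Set.piecewise, emb_mem_simplex ha hq]
  · filter_upwards [ae_mem_simplex ha hf] with p hp
    simp [Set.piecewise, hp]

theorem continuous_jwt {b n : ℕ} (Q : Matrix (Fin b) (Fin a) ℝ) (xv : Fin n → Fin a)
    (y : Fin n → Fin b) : Continuous fun p => jwt Q p xv y := by
  unfold jwt; fun_prop

theorem wgt_eq {b n : ℕ} (ha : 1 ≤ a) (hf : IsContDensity μ f) (Q : Matrix (Fin b) (Fin a) ℝ)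
    (xv : Fin n → Fin a) (y : Fin n → Fin b) :
    wgt Q μ xv y = ∫ q in stdCorner (a - 1), jwt Q (emb a q) xv y * f q :=
  integral_eq_stdCorner ha hf (continuous_jwt Q xv y).continuousOn

theorem wgt_nonneg {b n : ℕ} (ha : 1 ≤ a) (hf : IsContDensity μ f)
    {Q : Matrix (Fin b) (Fin a) ℝ} (hQpos : ∀ y x, 0 < Q y x)
    (xv : Fin n → Fin a) (y : Fin n → Fin b) : 0 ≤ wgt Q μ xv y := by
  rw [wgt_eq ha hf]
  refine setIntegral_nonneg (isClosed_stdCorner _).measurableSet fun q hq => ?_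
  exact mul_nonneg (jwt_nonneg hQpos (emb_mem_simplex ha hq) _ _) (hf.2.1 q)

/-- The conditional risk given `p`, for the frequency of a single symbol `α`. -/
def riskAt {b n : ℕ} (Q : Matrix (Fin b) (Fin a) ℝ) (p : Fin a → ℝ) (α : Fin a)
    (Φ : (Fin n → Fin b) → ℝ) : ℝ :=
  ∑ xv : Fin n → Fin a, ∑ y : Fin n → Fin b, jwt Q p xv y * (freqVec xv α - Φ y) ^ 2

theorem continuous_riskAt {b n : ℕ} (Q : Matrix (Fin b) (Fin a) ℝ) (α : Fin a)
    (Φ : (Fin n → Fin b) → ℝ) : Continuous fun p => riskAt Q p α Φ := by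
  unfold riskAt
  exact continuous_finsetSum _ fun xv _ => continuous_finsetSum _ fun y _ =>
    (continuous_jwt Q xv y).mul continuous_const

theorem riskAt_nonneg {b n : ℕ} {Q : Matrix (Fin b) (Fin a) ℝ} (hQpos : ∀ y x, 0 < Q y x)
    {p : Fin a → ℝ} (hp : p ∈ simplex a) (α : Fin a)
    (Φ : (Fin n → Fin b) → ℝ) : 0 ≤ riskAt Q p α Φ :=
  Finset.sum_nonneg fun xv _ => Finset.sum_nonneg fun y _ =>
    mul_nonneg (jwt_nonneg hQpos hp xv y) (sq_nonneg _)

theorem MSEfreq_eq {b n : ℕ} (ha : 1 ≤ a) (hf : IsContDensity μ f) (Q : Matrix (Fin b) (Fin a) ℝ)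
    (Est : (Fin n → Fin b) → (Fin a → ℝ)) :
    MSEfreq Q μ Est =
      ∑ α, ∫ q in stdCorner (a - 1), riskAt Q (emb a q) α (fun y => Est y α) * f q := by
  have key : ∀ α, ∫ q in stdCorner (a - 1), riskAt Q (emb a q) α (fun y => Est y α) * f q
      = ∑ xv : Fin n → Fin a, ∑ y : Fin n → Fin b,
        wgt Q μ xv y * (freqVec xv α - Est y α) ^ 2 := by
    intro α
    have hi : ∀ (xv : Fin n → Fin a) (y : Fin n → Fin b), IntegrableOn
        (fun q => jwt Q (emb a q) xv y * f q) (stdCorner (a - 1)) := fun xv y =>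
      integrableOn_stdCorner
        (((continuous_jwt Q xv y).comp (continuous_emb a)).continuousOn.mul hf.1)
    have e : ∀ q, riskAt Q (emb a q) α (fun y => Est y α) * f q
        = ∑ xv : Fin n → Fin a, ∑ y : Fin n → Fin b,
          jwt Q (emb a q) xv y * f q * (freqVec xv α - Est y α) ^ 2 := by
      intro q
      simp only [riskAt, Finset.sum_mul]
      exact Finset.sum_congr rfl fun _ _ => Finset.sum_congr rfl fun _ _ => by ring
    simp only [e]
    rw [integral_finsetSum _ fun xv _ => integrable_finsetSum _ fun y _ => (hi xv y).mul_const _]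
    refine Finset.sum_congr rfl fun xv _ => ?_
    rw [integral_finsetSum _ fun y _ => (hi xv y).mul_const _]
    refine Finset.sum_congr rfl fun y _ => ?_
    rw [integral_mul_const, wgt_eq ha hf]
  simp only [key, MSEfreq, Finset.mul_sum]
  exact (Finset.sum_congr rfl fun xv _ => Finset.sum_comm).trans Finset.sum_comm
end

/-! ### Integration by parts on `Δ` -/

theorem integral_fderiv_eq_zero {m : ℕ} {g : (Fin m → ℝ) → ℝ} (hg : ContDiff ℝ 1 g)
    (hs : HasCompactSupport g) (v : Fin m → ℝ) : ∫ q, fderiv ℝ g q v = 0 := by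
  have hc : Continuous fun q => fderiv ℝ g q v :=
    (hg.continuous_fderiv one_ne_zero).clm_apply continuous_const
  have h := integral_mul_fderiv_eq_neg_fderiv_mul_of_integrable (μ := volume)
    (f := fun _ : Fin m → ℝ => (1 : ℝ)) (g := g) (v := v)
    (by simp) (by
      simp only [one_mul]
      exact hc.integrable_of_hasCompactSupport (hs.fderiv_apply (𝕜 := ℝ) v))
    (by simpa using hg.continuous.integrable_of_hasCompactSupport hs)
    (by simp) (fun x _ => hg.differentiable one_ne_zero x)
  simpa using h

/-- The coordinate partial derivative. -/
def pd {m : ℕ} (j : Fin m) (g : (Fin m → ℝ) → ℝ) (q : Fin m → ℝ) : ℝ :=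
  fderiv ℝ g q (Pi.single j 1)

/-- The coefficient `ρ` for which `h ρ` is the divergence of the vector field `h² c`. -/
def divCoef {m : ℕ} (h : (Fin m → ℝ) → ℝ) (c : Fin m → (Fin m → ℝ) → ℝ) (q : Fin m → ℝ) : ℝ :=
  h q * ∑ j, pd j (c j) q + 2 * ∑ j, c j q * pd j h q

theorem continuous_pd {m : ℕ} (j : Fin m) {g : (Fin m → ℝ) → ℝ} (hg : ContDiff ℝ 1 g) :
    Continuous (pd j g) :=
  (hg.continuous_fderiv one_ne_zero).clm_apply continuous_const

theorem continuous_divCoef {m : ℕ} {h : (Fin m → ℝ) → ℝ} (hh : ContDiff ℝ 1 h)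
    {c : Fin m → (Fin m → ℝ) → ℝ} (hc : ∀ j, ContDiff ℝ 1 (c j)) : Continuous (divCoef h c) := by
  unfold divCoef
  have h1 := hh.continuous
  have h2 := fun j => (hc j).continuous
  have h3 := fun j => continuous_pd j (hc j)
  have h4 := fun j => continuous_pd j hh
  fun_prop

/-- Divergence theorem for the compactly supported field `h² g c`. -/
theorem integral_divergence_eq_zero {m : ℕ} {h : (Fin m → ℝ) → ℝ} (hh : ContDiff ℝ 1 h)
    (hs : HasCompactSupport h) {c : Fin m → (Fin m → ℝ) → ℝ} (hc : ∀ j, ContDiff ℝ 1 (c j))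
    {g : (Fin m → ℝ) → ℝ} (hg : ContDiff ℝ 1 g) :
    ∫ q, (h q * divCoef h c q * g q + h q ^ 2 * ∑ j, c j q * pd j g q) = 0 := by
  have hF : ∀ j, ContDiff ℝ 1 (fun q => h q * (h q * c j q * g q)) := fun j => by
    have := hc j; fun_prop
  have hFs : ∀ j, HasCompactSupport (fun q => h q * (h q * c j q * g q)) := fun j => hs.mul_right
  have e : ∀ q, h q * divCoef h c q * g q + h q ^ 2 * ∑ j, c j q * pd j g q
      = ∑ j, fderiv ℝ (fun q => h q * (h q * c j q * g q)) q (Pi.single j 1) := by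
    intro q
    have dh := (hh.differentiable one_ne_zero q).hasFDerivAt
    have dg := (hg.differentiable one_ne_zero q).hasFDerivAt
    have dc := fun j => ((hc j).differentiable one_ne_zero q).hasFDerivAt
    have : ∀ j, fderiv ℝ (fun q => h q * (h q * c j q * g q)) q (Pi.single j 1)
        = h q * g q * h q * pd j (c j) q + 2 * (h q * g q) * (c j q * pd j h q)
          + h q ^ 2 * (c j q * pd j g q) := by
      intro j
      rw [(dh.fun_mul ((dh.fun_mul (dc j)).fun_mul dg)).fderiv]
      simp only [_root_.add_apply, _root_.smul_apply, smul_eq_mul, pd]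
      ring
    simp only [this, Finset.sum_add_distrib, ← Finset.mul_sum, divCoef]
    ring
  simp only [e]
  rw [integral_finsetSum]
  · exact Finset.sum_eq_zero fun j _ => integral_fderiv_eq_zero (hF j) (hFs j) _
  · intro j _
    exact (continuous_pd j (hF j)).integrable_of_hasCompactSupport ((hFs j).fderiv_apply (𝕜 := ℝ) _)

/-- The direction `u ∈ ℝ^a` of zero total mass induced by a direction `c ∈ ℝ^{a-1}`. -/
def embLin (a : ℕ) (c : Fin (a - 1) → ℝ) : Fin a → ℝ :=
  fun x => if h : (x : ℕ) < a - 1 then c ⟨x.1, h⟩ else - ∑ i, c i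

theorem pd_emb (a : ℕ) (c : Fin (a - 1) → ℝ) (α : Fin a) (q : Fin (a - 1) → ℝ) :
    ContDiff ℝ 1 (fun q => emb a q α) ∧
    ∑ j, c j * pd j (fun q => emb a q α) q = embLin a c α := by
  by_cases h : (α : ℕ) < a - 1
  · simp only [emb, embLin, dif_pos h, pd]
    refine ⟨by fun_prop, ?_⟩
    have : ∀ j, fderiv ℝ (fun q : Fin (a - 1) → ℝ => q ⟨α, h⟩) q (Pi.single j 1)
        = if ⟨α, h⟩ = j then 1 else 0 := fun j => by
      rw [(hasFDerivAt_apply (𝕜 := ℝ) (⟨α, h⟩ : Fin (a - 1)) q).fderiv]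
      simp [Pi.single_apply]
    simp [this]
  · simp only [emb, embLin, dif_neg h, pd]
    refine ⟨by fun_prop, ?_⟩
    have : ∀ j, fderiv ℝ (fun q : Fin (a - 1) → ℝ => 1 - ∑ i, q i) q (Pi.single j 1) = -1 := by
      intro j
      have hd : HasFDerivAt (fun q : Fin (a - 1) → ℝ => 1 - ∑ i, q i) _ q :=
        (HasFDerivAt.fun_sum fun i _ => hasFDerivAt_apply (𝕜 := ℝ) i q).const_sub 1
      rw [hd.fderiv]
      simp [Pi.single_apply]
    simp [this]

theorem sum_embLin {a : ℕ} (ha : 1 ≤ a) (c : Fin (a - 1) → ℝ) : ∑ x, embLin a c x = 0 := by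
  obtain ⟨m, rfl⟩ : ∃ m, a = m + 1 := ⟨a - 1, by omega⟩
  rw [Fin.sum_univ_castSucc]
  have h1 : ∀ i : Fin m, embLin (m + 1) c i.castSucc = c i := fun i => by
    have : ((i.castSucc : Fin (m + 1)) : ℕ) < m + 1 - 1 := by simp
    rw [embLin, dif_pos this]; rfl
  have h2 : embLin (m + 1) c (Fin.last m) = - ∑ i, c i := by
    rw [embLin, dif_neg (by simp)]
  rw [h2, Finset.sum_congr rfl fun i _ => h1 i]
  exact add_neg_cancel _

theorem contDiff_lik_emb {a b n : ℕ} (Q : Matrix (Fin b) (Fin a) ℝ) (y : Fin n → Fin b) :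
    ContDiff ℝ 1 (fun q => lik Q y (emb a q)) := by
  have h := fun x => (pd_emb a 0 x 0).1
  simp only [lik, mulVec, dotProduct]
  fun_prop

theorem pd_mulVec_emb {a b : ℕ} (Q : Matrix (Fin b) (Fin a) ℝ) (c : Fin (a - 1) → ℝ) (k : Fin b)
    (q : Fin (a - 1) → ℝ) :
    ∑ j, c j * pd j (fun q => Q.mulVec (emb a q) k) q = Q.mulVec (embLin a c) k := by
  have h := fun x => (pd_emb a 0 x 0).1
  have d := fun x => ((h x).differentiable one_ne_zero q).hasFDerivAt
  have : ∀ j, pd j (fun q => Q.mulVec (emb a q) k) q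
      = ∑ x, Q k x * pd j (fun q => emb a q x) q := by
    intro j
    have hd : HasFDerivAt (fun q => ∑ x, Q k x * emb a q x) _ q :=
      HasFDerivAt.fun_sum fun x _ => (d x).const_mul (Q k x)
    rw [pd]
    simp only [mulVec, dotProduct]
    rw [hd.fderiv]
    simp [pd]
  simp only [this]
  simp only [mulVec, dotProduct, ← (pd_emb a c _ q).2, Finset.mul_sum]
  rw [Finset.sum_comm]
  exact Finset.sum_congr rfl fun _ _ => Finset.sum_congr rfl fun _ _ => by ring

/-- Logarithmic derivative of the likelihood along a direction. -/
theorem pd_lik_emb {a b n : ℕ} (Q : Matrix (Fin b) (Fin a) ℝ) (c : Fin (a - 1) → ℝ)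
    (y : Fin n → Fin b) (q : Fin (a - 1) → ℝ) (hr : ∀ k, 0 < Q.mulVec (emb a q) k) :
    ∑ j, c j * pd j (fun q => lik Q y (emb a q)) q
      = lik Q y (emb a q) * ∑ i, Q.mulVec (embLin a c) (y i) / Q.mulVec (emb a q) (y i) := by
  have h : ∀ k, ContDiff ℝ 1 (fun q => Q.mulVec (emb a q) k) := fun k => by
    have h := fun x => (pd_emb a 0 x 0).1
    simp only [mulVec, dotProduct]
    fun_prop
  have d := fun k => ((h k).differentiable one_ne_zero q).hasFDerivAt
  have : ∀ j, pd j (fun q => lik Q y (emb a q)) q = ∑ i, lik Q y (emb a q) *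
      (pd j (fun q => Q.mulVec (emb a q) (y i)) q / Q.mulVec (emb a q) (y i)) := by
    intro j
    have hd : HasFDerivAt (fun q => lik Q y (emb a q)) _ q :=
      HasFDerivAt.finsetProd fun i _ => d (y i)
    rw [pd, hd.fderiv]
    simp only [_root_.sum_apply, _root_.smul_apply, smul_eq_mul, pd, lik]
    refine Finset.sum_congr rfl fun i _ => ?_
    rw [← Finset.mul_prod_erase Finset.univ _ (Finset.mem_univ i)]
    field_simp [(hr (y i)).ne']
  simp only [this, ← pd_mulVec_emb Q c _ q, Finset.mul_sum, Finset.sum_div]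
  rw [Finset.sum_comm]
  exact Finset.sum_congr rfl fun _ _ => Finset.sum_congr rfl fun _ _ => by ring

/-! ### The integrated risk bound -/

/-- The vector `p_α e_α - u`, where `u` is the direction induced by `c`. -/
def testVec (a : ℕ) (α : Fin a) (c : Fin (a - 1) → ℝ) (q : Fin (a - 1) → ℝ) : Fin a → ℝ :=
  fun x => (if x = α then emb a q α else 0) - embLin a c x

/-- The quadratic form of `D_p`. -/
def Dquad {a b : ℕ} (Q : Matrix (Fin b) (Fin a) ℝ) (p w : Fin a → ℝ) : ℝ :=
  ∑ y, Q.mulVec w y ^ 2 / Q.mulVec p y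

theorem continuous_embLin (a : ℕ) : Continuous (embLin a) := by
  refine continuous_pi fun x => ?_
  by_cases h : (x : ℕ) < a - 1
  · simp only [embLin, dif_pos h]; fun_prop
  · simp only [embLin, dif_neg h]; fun_prop

section
variable {a b : ℕ} {Q : Matrix (Fin b) (Fin a) ℝ}

theorem continuousOn_testVec (α : Fin a) {c : Fin (a - 1) → (Fin (a - 1) → ℝ) → ℝ}
    {s : Set (Fin (a - 1) → ℝ)} (hc : ∀ j, ContinuousOn (c j) s) :
    ContinuousOn (fun q => testVec a α (fun j => c j q) q) s := by
  refine continuousOn_pi.2 fun x => ?_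
  unfold testVec
  have h1 := continuous_emb a
  have h2 : ContinuousOn (fun q => embLin a fun j => c j q) s :=
    (continuous_embLin a).comp_continuousOn (continuousOn_pi.2 hc)
  have h3 : ContinuousOn (fun q => embLin a (fun j => c j q) x) s :=
    (continuous_apply x).comp_continuousOn h2
  refine ContinuousOn.sub ?_ h3
  split_ifs
  · exact ((continuous_apply α).comp h1).continuousOn
  · exact continuousOn_const

theorem continuous_mulVec_apply (Q : Matrix (Fin b) (Fin a) ℝ) (y : Fin b) :
    Continuous fun p : Fin a → ℝ => Q.mulVec p y := by
  simp only [mulVec, dotProduct]; fun_prop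

theorem continuousOn_Dquad (ha : 1 ≤ a) (hQpos : ∀ y x, 0 < Q y x)
    {w : (Fin (a - 1) → ℝ) → Fin a → ℝ} (hw : ContinuousOn w (stdCorner (a - 1))) :
    ContinuousOn (fun q => Dquad Q (emb a q) (w q)) (stdCorner (a - 1)) := by
  unfold Dquad
  refine continuousOn_finsetSum _ fun y _ => ContinuousOn.div ?_ ?_ ?_
  · exact ((continuous_mulVec_apply Q y).comp_continuousOn hw).pow 2
  · exact ((continuous_mulVec_apply Q y).comp (continuous_emb a)).continuousOn
  · exact fun q hq => (mulVec_pos_of_simplex hQpos (emb_mem_simplex ha hq) y).ne'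

/-- Integrated lower bound on the risk (a van Trees type inequality): the prior density is
replaced by a smooth minorant `h²` supported in `Δ`, and the boundary-free integration by parts
removes every term containing the estimator `Φ`. -/
theorem integral_risk_lower_bound {n : ℕ} (ha : 1 ≤ a) (hQpos : ∀ y x, 0 < Q y x)
    (hQcol : ∀ x, ∑ y, Q y x = 1) {f : (Fin (a - 1) → ℝ) → ℝ}
    (hf : ContinuousOn f (stdCorner (a - 1)))
    {h : (Fin (a - 1) → ℝ) → ℝ} (hh : ContDiff ℝ 1 h) (hs : tsupport h ⊆ stdCorner (a - 1))
    (hle : ∀ q ∈ stdCorner (a - 1), h q ^ 2 ≤ f q)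
    {c : Fin (a - 1) → (Fin (a - 1) → ℝ) → ℝ} (hc : ∀ j, ContDiff ℝ 1 (c j))
    (hn : 0 < n) (α : Fin a) (Φ : (Fin n → Fin b) → ℝ) :
    (∫ q in stdCorner (a - 1), h q ^ 2 * (2 * testVec a α (fun j => c j q) q α - emb a q α
        - Dquad Q (emb a q) (testVec a α (fun j => c j q) q)))
      - (∫ q in stdCorner (a - 1), divCoef h c q ^ 2) / n
    ≤ n * ∫ q in stdCorner (a - 1), riskAt Q (emb a q) α Φ * f q := by
  have hms := (isClosed_stdCorner (a - 1)).measurableSet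
  have hcs : HasCompactSupport h :=
    (isCompact_stdCorner _).of_isClosed_subset (isClosed_tsupport h) hs
  have hcc : ∀ j, ContinuousOn (c j) (stdCorner (a - 1)) := fun j => (hc j).continuous.continuousOn
  have hW := continuousOn_testVec α hcc
  have hWα : ContinuousOn (fun q => testVec a α (fun j => c j q) q α) (stdCorner (a - 1)) :=
    (continuous_apply α).comp_continuousOn hW
  have hD := continuousOn_Dquad ha hQpos hW
  have hhc : ContinuousOn h (stdCorner (a - 1)) := hh.continuous.continuousOn
  have hρ : ContinuousOn (divCoef h c) (stdCorner (a - 1)) :=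
    (continuous_divCoef hh hc).continuousOn
  have hpα : ContinuousOn (fun q => emb a q α) (stdCorner (a - 1)) :=
    ((continuous_apply α).comp (continuous_emb a)).continuousOn
  let T : ((Fin (a - 1) → ℝ) → ℝ) → (Fin (a - 1) → ℝ) → ℝ := fun g q =>
    h q * divCoef h c q * g q + h q ^ 2 * ∑ j, c j q * pd j g q
  have hTc : ∀ g, ContDiff ℝ 1 g → ContinuousOn (T g) (stdCorner (a - 1)) := by
    intro g hg
    have h1 := hh.continuous
    have h2 := fun j => (hc j).continuous
    have h3 := fun j => continuous_pd j hg
    have h4 := continuous_divCoef hh hc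
    have h5 := hg.continuous
    refine Continuous.continuousOn ?_
    simp only [T]
    fun_prop
  have hT0 : ∀ g, ContDiff ℝ 1 g → ∫ q in stdCorner (a - 1), T g q = 0 := by
    intro g hg
    rw [setIntegral_eq_integral_of_forall_compl_eq_zero]
    · exact integral_divergence_eq_zero hh hcs hc hg
    · intro q hq
      have : h q = 0 := image_eq_zero_of_notMem_tsupport fun hq' => hq (hs hq')
      simp [T, this]
  have hg0 : ContDiff ℝ 1 (fun q => emb a q α) := (pd_emb a 0 α 0).1
  have hgy : ∀ y : Fin n → Fin b, ContDiff ℝ 1 (fun q => lik Q y (emb a q)) :=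
    fun y => contDiff_lik_emb Q y
  -- `T g` is the divergence of `h² g c`, so it integrates to zero for `g = p_α` and `g = lik`
  have hpt : ∀ q ∈ stdCorner (a - 1),
      h q ^ 2 * (2 * testVec a α (fun j => c j q) q α - emb a q α
        - Dquad Q (emb a q) (testVec a α (fun j => c j q) q)) - divCoef h c q ^ 2 / n
      + 2 * T (fun q => emb a q α) q - 2 * ∑ y : Fin n → Fin b,
        Φ y * T (fun q => lik Q y (emb a q)) q
      ≤ n * (riskAt Q (emb a q) α Φ * f q) := by
    intro q hq
    have hp := emb_mem_simplex ha hq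
    have hr := mulVec_pos_of_simplex hQpos hp
    set p := emb a q with hpdef
    set u := embLin a (fun j => c j q) with hu
    set w := testVec a α (fun j => c j q) q with hw
    have hwu : ∀ y, Q.mulVec w y = p α * Q y α - Q.mulVec u y := by
      intro y
      simp only [hw, testVec, mulVec, dotProduct, mul_sub, Finset.sum_sub_distrib]
      simp [mul_comm, hu, hpdef]
    have hsum : ∑ y, Q.mulVec p y * (Q.mulVec w y / Q.mulVec p y) = p α := by
      rw [Finset.sum_congr rfl fun y _ => mul_div_cancel₀ _ (hr y).ne', sum_mulVec_eq hQcol]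
      simp only [hw, testVec, Finset.sum_sub_distrib, sum_embLin ha]
      simp [hpdef]
    have hq2 : ∑ y, Q.mulVec p y * (Q.mulVec w y / Q.mulVec p y) ^ 2 = Dquad Q p w := by
      refine Finset.sum_congr rfl fun y _ => ?_
      have := (hr y).ne'
      field_simp
    have hscore : ∀ y, p α * Q y α / Q.mulVec p y - Q.mulVec w y / Q.mulVec p y
        = Q.mulVec u y / Q.mulVec p y := fun y => by rw [hwu]; ring
    have key := risk_lower_bound hQpos hQcol hp hn α (fun y => Q.mulVec w y / Q.mulVec p y)
      hsum (h q) (divCoef h c q) Φ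
    simp only [hq2, hscore] at key
    have e0 : T (fun q => emb a q α) q = h q * divCoef h c q * p α + h q ^ 2 * u α := by
      simp only [T, (pd_emb a (fun j => c j q) α q).2, hu, hpdef]
    have ey : ∀ y : Fin n → Fin b, T (fun q => lik Q y (emb a q)) q
        = lik Q y p * (h q ^ 2 * ∑ i, Q.mulVec u (y i) / Q.mulVec p (y i)
          + h q * divCoef h c q) := by
      intro y
      simp only [T, pd_lik_emb Q (fun j => c j q) y q hr, hu, hpdef]
      ring
    have hwα : w α = p α - u α := by simp [hw, testVec, hpdef, hu]
    have hrisk : (n : ℝ) * (h q ^ 2 * riskAt Q p α Φ) ≤ n * (riskAt Q p α Φ * f q) := by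
      refine mul_le_mul_of_nonneg_left ?_ (Nat.cast_nonneg n)
      rw [mul_comm]
      exact mul_le_mul_of_nonneg_left (hle q hq) (riskAt_nonneg hQpos hp α Φ)
    refine le_trans (le_of_eq ?_) (key.trans hrisk)
    simp only [ey, e0, hwα]
    ring
  have i1 : IntegrableOn (fun q => h q ^ 2 * (2 * testVec a α (fun j => c j q) q α - emb a q α
        - Dquad Q (emb a q) (testVec a α (fun j => c j q) q))) (stdCorner (a - 1)) :=
    integrableOn_stdCorner ((hhc.pow 2).mul (((hWα.const_mul 2).sub hpα).sub hD))
  have i2 : IntegrableOn (fun q => divCoef h c q ^ 2 / n) (stdCorner (a - 1)) :=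
    integrableOn_stdCorner ((hρ.pow 2).div_const _)
  have i3 : IntegrableOn (fun q => 2 * T (fun q => emb a q α) q) (stdCorner (a - 1)) :=
    integrableOn_stdCorner ((hTc _ hg0).const_mul _)
  have i4 : ∀ y : Fin n → Fin b, IntegrableOn
      (fun q => Φ y * T (fun q => lik Q y (emb a q)) q) (stdCorner (a - 1)) :=
    fun y => integrableOn_stdCorner ((hTc _ (hgy y)).const_mul _)
  have i5 : IntegrableOn (fun q => 2 * ∑ y : Fin n → Fin b,
        Φ y * T (fun q => lik Q y (emb a q)) q) (stdCorner (a - 1)) :=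
    (integrable_finsetSum _ fun y _ => i4 y).const_mul 2
  have i6 : IntegrableOn (fun q => (n : ℝ) * (riskAt Q (emb a q) α Φ * f q)) (stdCorner (a - 1)) :=
    integrableOn_stdCorner ((((continuous_riskAt Q α Φ).comp (continuous_emb a)).continuousOn.mul
      hf).const_mul _)
  have hmono := setIntegral_mono_on (((i1.sub i2).add i3).sub i5) i6 hms hpt
  have esplit : ∫ q in stdCorner (a - 1), (h q ^ 2 * (2 * testVec a α (fun j => c j q) q α
        - emb a q α - Dquad Q (emb a q) (testVec a α (fun j => c j q) q)) - divCoef h c q ^ 2 / n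
      + 2 * T (fun q => emb a q α) q - 2 * ∑ y : Fin n → Fin b,
        Φ y * T (fun q => lik Q y (emb a q)) q)
      = (∫ q in stdCorner (a - 1), h q ^ 2 * (2 * testVec a α (fun j => c j q) q α - emb a q α
        - Dquad Q (emb a q) (testVec a α (fun j => c j q) q)))
      - (∫ q in stdCorner (a - 1), divCoef h c q ^ 2) / n := by
    refine (integral_sub ((i1.sub i2).add i3) i5).trans ?_
    rw [integral_add' (i1.sub i2) i3, integral_sub' i1 i2,
      integral_const_mul, integral_const_mul, hT0 _ hg0, integral_finsetSum _ fun y _ => i4 y,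
      integral_div]
    simp [integral_const_mul, hT0 _ (hgy _)]
  rw [← esplit, ← integral_const_mul]
  exact hmono
end

/-! ### Smooth approximation -/

open scoped Topology Manifold ContDiff in
/-- Smooth selections from a family of convex sets admitting locally constant selections. -/
theorem exists_contDiff_mem_convex {m : ℕ} {t : (Fin m → ℝ) → Set ℝ} (ht : ∀ x, Convex ℝ (t x))
    (hloc : ∀ x, ∃ c : ℝ, ∀ᶠ y in 𝓝 x, c ∈ t y) :
    ∃ g : (Fin m → ℝ) → ℝ, ContDiff ℝ 1 g ∧ ∀ x, g x ∈ t x := by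
  obtain ⟨g, hg⟩ := exists_contMDiffMap_forall_mem_convex_of_local_const (n := 1)
    𝓘(ℝ, Fin m → ℝ) ht hloc
  exact ⟨g, g.contMDiff.contDiff, hg⟩

open scoped Topology in
theorem exists_smooth_approx {m : ℕ} {c : (Fin m → ℝ) → ℝ} (hc : ContinuousOn c (stdCorner m))
    {ε : ℝ} (hε : 0 < ε) :
    ∃ g : (Fin m → ℝ) → ℝ, ContDiff ℝ 1 g ∧ ∀ q ∈ stdCorner m, |g q - c q| ≤ ε := by
  obtain ⟨g, hg, hgt⟩ := exists_contDiff_mem_convex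
    (t := fun q => {z | q ∈ stdCorner m → z ∈ Metric.closedBall (c q) ε})
    (fun q => by
      by_cases hq : q ∈ stdCorner m
      · simpa [hq] using! convex_closedBall (c q) ε
      · simpa [hq] using! convex_univ)
    (fun q => by
      by_cases hq : q ∈ stdCorner m
      · refine ⟨c q, ?_⟩
        have := (hc q hq).eventually (Metric.closedBall_mem_nhds (c q) hε)
        rw [eventually_nhdsWithin_iff] at this
        filter_upwards [this] with y hy hy'
        exact Metric.mem_closedBall_comm.1 (hy hy')
      · refine ⟨0, ?_⟩
        filter_upwards [(isClosed_stdCorner m).isOpen_compl.mem_nhds hq] with y hy hy'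
        exact absurd hy' hy)
  exact ⟨g, hg, fun q hq => by simpa [Real.dist_eq] using hgt q hq⟩

open scoped Topology in
/-- A smooth function squeezed slightly below `w = min (√f) (N · dist(q, Δᶜ))`; it is supported
in `Δ` because `w` vanishes off `Δ`. -/
theorem exists_smooth_below {m : ℕ} {f : (Fin m → ℝ) → ℝ}
    (hf : ContinuousOn f (stdCorner m)) (N : ℝ) {δ : ℝ} (hδ : 0 < δ) :
    ∃ h : (Fin m → ℝ) → ℝ, ContDiff ℝ 1 h ∧ ∀ q, 0 ≤ h q ∧
      min √(f q) (N * Metric.infDist q (stdCorner m)ᶜ) - δ ≤ h q ∧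
      h q ≤ max (min √(f q) (N * Metric.infDist q (stdCorner m)ᶜ) - δ / 4) 0 := by
  set w : (Fin m → ℝ) → ℝ := fun q => min √(f q) (N * Metric.infDist q (stdCorner m)ᶜ) with hw
  have hdist : Continuous fun q => N * Metric.infDist q (stdCorner m)ᶜ :=
    continuous_const.mul (Metric.continuous_infDist_pt _)
  refine exists_contDiff_mem_convex
    (t := fun q => {z | 0 ≤ z ∧ w q - δ ≤ z ∧ z ≤ max (w q - δ / 4) 0})
    (fun q => (convex_Ici 0).inter ((convex_Ici _).inter (convex_Iic _))) fun q => ?_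
  by_cases hq : q ∈ interior (stdCorner m)
  · have hfc : ContinuousAt f q := hf.continuousAt (mem_interior_iff_mem_nhds.1 hq)
    have hwc : ContinuousAt w q := hfc.sqrt.min hdist.continuousAt
    refine ⟨max (w q - δ / 2) 0, ?_⟩
    filter_upwards [hwc.eventually (Metric.ball_mem_nhds (w q) (by positivity : 0 < δ / 4))]
      with y hy
    rw [Real.dist_eq, abs_lt] at hy
    refine ⟨le_max_right _ _, le_max_of_le_left (by linarith [hy.2]), ?_⟩
    exact max_le_max (by linarith [hy.1]) le_rfl
  · refine ⟨0, ?_⟩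
    have h0 : N * Metric.infDist q (stdCorner m)ᶜ = 0 := by
      have hcl : q ∈ closure (stdCorner m)ᶜ := by rw [closure_compl]; exact hq
      rw [Metric.infDist_zero_of_mem_closure hcl, mul_zero]
    have : ∀ᶠ y in 𝓝 q, N * Metric.infDist y (stdCorner m)ᶜ < δ :=
      hdist.continuousAt.eventually_lt continuousAt_const (by simpa [h0] using hδ)
    filter_upwards [this] with y hy
    refine ⟨le_rfl, ?_, le_max_right _ _⟩
    have := min_le_right √(f y) (N * Metric.infDist y (stdCorner m)ᶜ)
    simp only [hw]
    linarith

open scoped Topology in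
/-- The density `f` is approximated in `L¹(Δ)` from below by squares of smooth functions
supported in `Δ`. -/
theorem exists_smooth_minorant {m : ℕ} (hm : 0 < m) {f : (Fin m → ℝ) → ℝ}
    (hf : ContinuousOn f (stdCorner m)) (hf0 : ∀ q, 0 ≤ f q) {ε : ℝ} (hε : 0 < ε) :
    ∃ h : (Fin m → ℝ) → ℝ, ContDiff ℝ 1 h ∧ tsupport h ⊆ stdCorner m ∧
      (∀ q ∈ stdCorner m, h q ^ 2 ≤ f q) ∧
      (∫ q in stdCorner m, f q) - ε ≤ ∫ q in stdCorner m, h q ^ 2 := by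
  choose h hsm h0 hlo hup using fun k : ℕ =>
    exists_smooth_below hf (k + 1 : ℝ) (δ := 1 / ((k : ℝ) + 1)) (by positivity)
  have hms := (isClosed_stdCorner m).measurableSet
  have hδ : ∀ k : ℕ, (0 : ℝ) < 1 / ((k : ℝ) + 1) := fun k => by positivity
  have hle : ∀ k q, h k q ≤ √(f q) := fun k q => (hup k q).trans (max_le
    (by linarith [min_le_left √(f q) (((k : ℝ) + 1) * Metric.infDist q (stdCorner m)ᶜ), hδ k])
    (Real.sqrt_nonneg _))
  have hsq : ∀ k q, h k q ^ 2 ≤ f q := fun k q => by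
    calc h k q ^ 2 ≤ √(f q) ^ 2 := pow_le_pow_left₀ (h0 k q) (hle k q) 2
      _ = f q := Real.sq_sqrt (hf0 q)
  have hsupp : ∀ k, tsupport (h k) ⊆ stdCorner m := fun k => by
    refine closure_minimal (fun q hq => ?_) (isClosed_stdCorner m)
    by_contra hq'
    have hd : Metric.infDist q (stdCorner m)ᶜ = 0 := Metric.infDist_zero_of_mem hq'
    have h2 := hup k q
    rw [hd, mul_zero, min_eq_right (Real.sqrt_nonneg _), max_eq_right (by linarith [hδ k])] at h2
    exact hq (le_antisymm h2 (h0 k q))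
  have hne : (stdCorner m)ᶜ.Nonempty := by
    refine ⟨fun _ => -1, fun hmem => ?_⟩
    have := hmem.1 ⟨0, hm⟩
    norm_num at this
  have hlim : ∀ q ∈ interior (stdCorner m), Tendsto (fun k => h k q ^ 2) atTop (𝓝 (f q)) := by
    intro q hq
    have hd : 0 < Metric.infDist q (stdCorner m)ᶜ := by
      rw [← Metric.infDist_pos_iff_notMem_closure hne, closure_compl]
      exact fun hn => hn hq
    have h1 : Tendsto (fun k : ℕ => √(f q) - 1 / ((k : ℝ) + 1)) atTop (𝓝 (√(f q))) := by
      simpa using (tendsto_const_nhds (x := √(f q))).sub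
        (tendsto_one_div_add_atTop_nhds_zero_nat (𝕜 := ℝ))
    have h2 : Tendsto (fun k => h k q) atTop (𝓝 (√(f q))) := by
      refine tendsto_of_tendsto_of_tendsto_of_le_of_le' h1 tendsto_const_nhds ?_
        (Eventually.of_forall fun k => hle k q)
      have h3 : Tendsto (fun k : ℕ => ((k : ℝ) + 1) * Metric.infDist q (stdCorner m)ᶜ)
          atTop atTop :=
        (tendsto_atTop_add_const_right _ _ tendsto_natCast_atTop_atTop).atTop_mul_const hd
      filter_upwards [h3.eventually_ge_atTop (√(f q))] with k hk
      have := hlo k q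
      rwa [min_eq_left hk] at this
    simpa [Real.sq_sqrt (hf0 q)] using h2.pow 2
  have hT : Tendsto (fun k => ∫ q in stdCorner m, h k q ^ 2) atTop
      (𝓝 (∫ q in stdCorner m, f q)) := by
    refine tendsto_integral_of_dominated_convergence f ?_ (integrableOn_stdCorner hf) ?_ ?_
    · exact fun k => ((hsm k).continuous.pow 2).aestronglyMeasurable
    · intro k
      refine Eventually.of_forall fun q => ?_
      rw [Real.norm_of_nonneg (sq_nonneg _)]
      exact hsq k q
    · have hfr : volume (frontier (stdCorner m)) = 0 := (convex_stdCorner m).addHaar_frontier _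
      rw [ae_restrict_iff' hms]
      have : ∀ᵐ q ∂(volume : Measure (Fin m → ℝ)), q ∉ frontier (stdCorner m) :=
        measure_eq_zero_iff_ae_notMem.1 hfr
      filter_upwards [this] with q hq hq'
      refine hlim q ?_
      by_contra hni
      exact hq ⟨subset_closure hq', hni⟩
  obtain ⟨k, hk⟩ := (hT.eventually (lt_mem_nhds (sub_lt_self _ hε))).exists
  exact ⟨h k, hsm k, hsupp k, fun q _ => hsq k q, hk.le⟩

/-! ### Near-optimal test fields -/

section
variable {a b : ℕ} {Q : Matrix (Fin b) (Fin a) ℝ}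

theorem continuousOn_Dmat (hQpos : ∀ y x, 0 < Q y x) : ContinuousOn (Dmat Q) (simplex a) := by
  refine continuousOn_pi.2 fun i => continuousOn_pi.2 fun j => ?_
  simp only [Dmat_apply]
  refine continuousOn_finsetSum _ fun y _ => ?_
  refine (continuousOn_const.mul ?_).mul continuousOn_const
  exact (continuous_mulVec_apply Q y).continuousOn.inv₀
    fun p hp => (mulVec_pos_of_simplex hQpos hp y).ne'

theorem continuousOn_Vmat (hQpos : ∀ y x, 0 < Q y x) (hrank : Q.rank = a) :
    ContinuousOn (Vmat Q) (simplex a) := by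
  have hD := continuousOn_iff_continuous_domRestrict.1 (continuousOn_Dmat hQpos)
  rw [continuousOn_iff_continuous_domRestrict]
  have : (simplex a).domRestrict (Vmat Q) = fun p : simplex a =>
      ((Dmat Q p).det)⁻¹ • (Dmat Q p).adjugate - Matrix.diagonal (p : Fin a → ℝ) := by
    funext p
    simp [Vmat, Matrix.inv_def]
  rw [this]
  refine ((Continuous.inv₀ hD.matrix_det fun p => ?_).smul hD.matrix_adjugate).sub
    continuous_subtype_val.matrix_diagonal
  exact (Dmat_posDef hQpos hrank p.2).det_pos.ne'

theorem Dquad_eq (Q : Matrix (Fin b) (Fin a) ℝ) (p w : Fin a → ℝ) :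
    Dquad Q p w = w ⬝ᵥ (Dmat Q p *ᵥ w) := by
  rw [Dmat, ← mulVec_mulVec, ← mulVec_mulVec, dotProduct_mulVec, vecMul_transpose, Dquad,
    dotProduct]
  refine Finset.sum_congr rfl fun y _ => ?_
  rw [mulVec_diagonal]
  ring

/-- Completing the square around the `α`-th row of `D_p⁻¹`. -/
theorem two_mul_sub_Dquad {p : Fin a → ℝ} (hD : IsUnit (Dmat Q p).det) (α : Fin a)
    (e : Fin a → ℝ) :
    2 * ((Dmat Q p)⁻¹ α + e) α - Dquad Q p ((Dmat Q p)⁻¹ α + e)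
      = (Dmat Q p)⁻¹ α α - Dquad Q p e := by
  set D := Dmat Q p with hDdef
  have hrow : D⁻¹ α = D⁻¹ *ᵥ Pi.single α 1 := by
    funext x
    rw [mulVec_single_one]
    exact (congrFun (congrFun (Dinv_symm Q p) α) x).symm
  have h1 : D *ᵥ D⁻¹ α = Pi.single α 1 := by
    rw [hrow, mulVec_mulVec, Matrix.mul_nonsing_inv _ hD, one_mulVec]
  have h2 : D⁻¹ α ⬝ᵥ (D *ᵥ e) = e α := by
    have hs : Dᵀ = D := Dmat_symm Q p
    rw [dotProduct_mulVec, ← mulVec_transpose, hs, h1]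
    simp
  simp only [Dquad_eq, ← hDdef, mulVec_add, add_dotProduct, dotProduct_add, h1, h2, Pi.add_apply]
  simp only [dotProduct_single, mul_one]
  ring

theorem embLin_of_sum_zero (ha : 1 ≤ a) (v : Fin a → ℝ) (hv : ∑ x, v x = 0) :
    embLin a (fun j => v ⟨j.1, lt_of_lt_of_le j.2 (Nat.sub_le a 1)⟩) = v := by
  obtain ⟨m, rfl⟩ : ∃ m, a = m + 1 := ⟨a - 1, by omega⟩
  funext x
  rw [embLin]
  split_ifs with h
  · rfl
  · have hx : x = Fin.last m := Fin.ext (by have := x.2; simp at h ⊢; omega)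
    rw [Fin.sum_univ_castSucc] at hv
    rw [hx, neg_eq_iff_add_eq_zero]
    exact hv

theorem embLin_sub (c d : Fin (a - 1) → ℝ) (x : Fin a) :
    embLin a c x - embLin a d x = embLin a (fun j => c j - d j) x := by
  unfold embLin
  split_ifs
  · rfl
  · rw [Finset.sum_sub_distrib]; ring

theorem abs_embLin_le {c : Fin (a - 1) → ℝ} {ε : ℝ} (hc : ∀ j, |c j| ≤ ε) (x : Fin a)
    (hε : 0 ≤ ε) : |embLin a c x| ≤ a * ε := by
  have ha : (1 : ℝ) ≤ a := by exact_mod_cast x.pos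
  unfold embLin
  split_ifs
  · exact (hc _).trans (le_mul_of_one_le_left hε ha)
  · rw [abs_neg]
    refine (Finset.abs_sum_le_sum_abs _ _).trans ((Finset.sum_le_sum fun j _ => hc j).trans ?_)
    rw [Finset.sum_const, Finset.card_univ, Fintype.card_fin, nsmul_eq_mul]
    exact mul_le_mul_of_nonneg_right (by exact_mod_cast Nat.sub_le a 1) hε

theorem exists_Dquad_bound (hQpos : ∀ y x, 0 < Q y x) :
    ∃ C, 0 ≤ C ∧ ∀ p ∈ simplex a, ∀ (e : Fin a → ℝ) (M : ℝ), (∀ x, |e x| ≤ M) →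
      Dquad Q p e ≤ C * M ^ 2 := by
  have hcont : ContinuousOn (fun p : Fin a → ℝ => Dquad Q p 1) (simplex a) := by
    unfold Dquad
    exact continuousOn_finsetSum _ fun y _ => continuousOn_const.div
      (continuous_mulVec_apply Q y).continuousOn
      fun p hp => (mulVec_pos_of_simplex hQpos hp y).ne'
  obtain ⟨C, hC⟩ := (isCompact_simplex a).exists_bound_of_continuousOn hcont
  refine ⟨max C 0, le_max_right _ _, fun p hp e M he => ?_⟩
  have h1 : Dquad Q p 1 ≤ max C 0 := (le_abs_self _).trans ((hC p hp).trans (le_max_left _ _))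
  refine le_trans ?_ (mul_le_mul_of_nonneg_right h1 (sq_nonneg M))
  rw [Dquad, Dquad, Finset.sum_mul]
  refine Finset.sum_le_sum fun y _ => ?_
  rw [div_mul_eq_mul_div]
  refine div_le_div_of_nonneg_right ?_ (mulVec_pos_of_simplex hQpos hp y).le
  rw [← mul_pow, ← sq_abs]
  refine pow_le_pow_left₀ (abs_nonneg _) ?_ 2
  simp only [mulVec, dotProduct, Pi.one_apply, mul_one, Finset.sum_mul]
  refine (Finset.abs_sum_le_sum_abs _ _).trans (Finset.sum_le_sum fun x _ => ?_)
  rw [abs_mul, abs_of_pos (hQpos y x)]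
  exact mul_le_mul_of_nonneg_left (he x) (hQpos y x).le

/-- The integrated bound with near-optimal smooth `h` and `c`. -/
theorem exists_risk_bound (ha : 2 ≤ a) (hQpos : ∀ y x, 0 < Q y x)
    (hQcol : ∀ x, ∑ y, Q y x = 1) (hrank : Q.rank = a) {f : (Fin (a - 1) → ℝ) → ℝ}
    (hf : ContinuousOn f (stdCorner (a - 1))) (hf0 : ∀ q, 0 ≤ f q)
    (hf1 : ∫ q in stdCorner (a - 1), f q = 1) (α : Fin a) {η : ℝ} (hη : 0 < η) :
    ∃ R : ℝ, ∀ n : ℕ, 0 < n → ∀ Φ : (Fin n → Fin b) → ℝ,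
      (∫ q in stdCorner (a - 1), Vmat Q (emb a q) α α * f q) - η - R / n
        ≤ n * ∫ q in stdCorner (a - 1), riskAt Q (emb a q) α Φ * f q := by
  have ha1 : 1 ≤ a := by omega
  have hms := (isClosed_stdCorner (a - 1)).measurableSet
  have hV : ∀ i j, ContinuousOn (fun p => Vmat Q p i j) (simplex a) := fun i j =>
    continuousOn_pi.1 (continuousOn_pi.1 (continuousOn_Vmat hQpos hrank) i) j
  obtain ⟨C, hC0, hC⟩ := exists_Dquad_bound hQpos
  obtain ⟨K, hK⟩ := (isCompact_simplex a).exists_bound_of_continuousOn (hV α α)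
  have hK' : ∀ p ∈ simplex a, Vmat Q p α α ≤ |K| := fun p hp =>
    (le_abs_self _).trans ((hK p hp).trans (le_abs_self _))
  set E := |K| + C * (a : ℝ) ^ 2 + 1 with hE
  have hEpos : 0 < E := by positivity
  set ε := min 1 (η / E) with hεdef
  have hε : 0 < ε := lt_min one_pos (div_pos hη hEpos)
  have hε1 : ε ≤ 1 := min_le_left _ _
  have hεE : E * ε ≤ η := by
    calc E * ε ≤ E * (η / E) := mul_le_mul_of_nonneg_left (min_le_right _ _) hEpos.le
      _ = η := mul_div_cancel₀ _ hEpos.ne'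
  obtain ⟨h, hh, hs, hle, hint⟩ := exists_smooth_minorant (by omega) hf hf0 hε
  have hVe : ∀ i j, ContinuousOn (fun q => Vmat Q (emb a q) i j) (stdCorner (a - 1)) :=
    fun i j => continuousOn_comp_emb ha1 (hV i j)
  choose c hc hcε using fun j : Fin (a - 1) => exists_smooth_approx
    (c := fun q => - Vmat Q (emb a q) α ⟨j.1, lt_of_lt_of_le j.2 (Nat.sub_le a 1)⟩)
    (hVe α _).neg hε
  refine ⟨∫ q in stdCorner (a - 1), divCoef h c q ^ 2, fun n hn Φ => ?_⟩
  refine le_trans ?_ (integral_risk_lower_bound ha1 hQpos hQcol hf hh hs hle hc hn α Φ)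
  refine sub_le_sub_right ?_ _
  -- completing the square: the exact value at `c` is `h² (V_αα - eᵀ D e)` with `e` of size `O(ε)`
  have hpt : ∀ q ∈ stdCorner (a - 1), Vmat Q (emb a q) α α * f q
        - (|K| * (f q - h q ^ 2) + C * (a : ℝ) ^ 2 * ε * f q)
      ≤ h q ^ 2 * (2 * testVec a α (fun j => c j q) q α - emb a q α
        - Dquad Q (emb a q) (testVec a α (fun j => c j q) q)) := by
    intro q hq
    have hp := emb_mem_simplex ha1 hq
    have hdu : IsUnit (Dmat Q (emb a q)).det := (Dmat_posDef hQpos hrank hp).det_pos.ne'.isUnit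
    set p := emb a q with hpdef
    have hVsum : ∑ x, - Vmat Q p α x = 0 := by
      have := congrFun (Vmat_mulVec_one hQpos hQcol hrank hp) α
      simp only [mulVec, dotProduct, Pi.one_apply, mul_one, Pi.zero_apply] at this
      rw [Finset.sum_neg_distrib, this, neg_zero]
    have hopt := embLin_of_sum_zero ha1 (fun x => - Vmat Q p α x) hVsum
    set e : Fin a → ℝ := fun x => - embLin a (fun j => c j q -
      (- Vmat Q p α ⟨j.1, lt_of_lt_of_le j.2 (Nat.sub_le a 1)⟩)) x with he
    have hw : testVec a α (fun j => c j q) q = (Dmat Q p)⁻¹ α + e := by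
      funext x
      simp only [Pi.add_apply, he, ← embLin_sub, testVec]
      rw [hopt]
      simp only [Vmat, Matrix.sub_apply, diagonal_apply, ← hpdef]
      by_cases hx : x = α
      · simp only [hx, if_true]; ring
      · simp only [hx, Ne.symm hx, if_false]; ring
    have hebd : Dquad Q p e ≤ C * (a : ℝ) ^ 2 * ε := by
      have h1 := hC p hp e (a * ε) fun x => by
        simp only [he, abs_neg]
        exact abs_embLin_le (fun j => hcε j q hq) x hε.le
      refine h1.trans ?_
      have : C * (a * ε) ^ 2 = C * (a : ℝ) ^ 2 * ε * ε := by ring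
      rw [this]
      exact mul_le_of_le_one_right (by positivity) hε1
    have hsq := two_mul_sub_Dquad hdu α e
    have hval : 2 * testVec a α (fun j => c j q) q α - p α
        - Dquad Q p (testVec a α (fun j => c j q) q) = Vmat Q p α α - Dquad Q p e := by
      rw [hw]
      simp only [Vmat, Matrix.sub_apply, diagonal_apply_eq]
      linarith
    rw [hval]
    have hle' := hle q hq
    have hCa : 0 ≤ C * (a : ℝ) ^ 2 * ε := by positivity
    nlinarith [hK' p hp, mul_le_mul_of_nonneg_left hebd (sq_nonneg (h q)),
      mul_le_mul_of_nonneg_right (hK' p hp) (sub_nonneg.2 hle'),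
      mul_le_mul_of_nonneg_left hle' hCa]
  have hhc : ContinuousOn h (stdCorner (a - 1)) := hh.continuous.continuousOn
  have hcc : ∀ j, ContinuousOn (c j) (stdCorner (a - 1)) := fun j => (hc j).continuous.continuousOn
  have hW := continuousOn_testVec α hcc
  have hWα : ContinuousOn (fun q => testVec a α (fun j => c j q) q α) (stdCorner (a - 1)) :=
    (continuous_apply α).comp_continuousOn hW
  have hpα : ContinuousOn (fun q => emb a q α) (stdCorner (a - 1)) :=
    ((continuous_apply α).comp (continuous_emb a)).continuousOn
  have iR := integrableOn_stdCorner ((hhc.pow 2).mul (((hWα.const_mul 2).sub hpα).sub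
    (continuousOn_Dquad ha1 hQpos hW)))
  have iVf := integrableOn_stdCorner ((hVe α α).mul hf)
  have iF := integrableOn_stdCorner hf
  have ih := integrableOn_stdCorner (hhc.pow 2)
  have i1 := (iF.sub ih).const_mul |K|
  have i2 := iF.const_mul (C * (a : ℝ) ^ 2 * ε)
  have hmono := setIntegral_mono_on (iVf.sub (i1.add i2)) iR hms hpt
  refine le_trans ?_ hmono
  have e1 : ∫ q in stdCorner (a - 1), (Vmat Q (emb a q) α α * f q
        - (|K| * (f q - h q ^ 2) + C * (a : ℝ) ^ 2 * ε * f q))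
      = (∫ q in stdCorner (a - 1), Vmat Q (emb a q) α α * f q)
        - (|K| * (1 - ∫ q in stdCorner (a - 1), h q ^ 2) + C * (a : ℝ) ^ 2 * ε) := by
    refine (integral_sub iVf (i1.add i2)).trans ?_
    rw [integral_add' i1 i2, integral_const_mul, integral_const_mul, integral_sub' iF ih, hf1,
      mul_one]
    rfl
  refine le_trans ?_ (le_of_eq e1.symm)
  rw [hf1] at hint
  have h3 : |K| * (1 - ∫ q in stdCorner (a - 1), h q ^ 2) ≤ |K| * ε :=
    mul_le_mul_of_nonneg_left (by linarith) (abs_nonneg K)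
  have h4 : E * ε = |K| * ε + C * (a : ℝ) ^ 2 * ε + ε := by rw [hE]; ring
  linarith
end

/-! ### The asymptotic bound and Jensen's inequality -/

section
variable {a b : ℕ} {Q : Matrix (Fin b) (Fin a) ℝ}

/-- A weighted mean minimises the weighted sum of squares. If all weights vanish, both sides do. -/
theorem weighted_mean_le {ι : Type*} [Fintype ι] (w F : ι → ℝ) (hw : ∀ i, 0 ≤ w i) (e : ℝ) :
    ∑ i, w i * (F i - (∑ i, w i * F i) / ∑ i, w i) ^ 2 ≤ ∑ i, w i * (F i - e) ^ 2 := by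
  rcases (Finset.sum_nonneg fun i (_ : i ∈ Finset.univ) => hw i).eq_or_lt with h0 | h0
  · have hz : ∀ i, w i = 0 := fun i =>
      (Finset.sum_eq_zero_iff_of_nonneg fun i _ => hw i).1 h0.symm i (Finset.mem_univ i)
    simp [hz]
  · set W := ∑ i, w i with hW
    set M := ∑ i, w i * F i with hM
    have key : ∀ t : ℝ, ∑ i, w i * (F i - t) ^ 2 = ∑ i, w i * F i ^ 2 - 2 * t * M + t ^ 2 * W := by
      intro t
      rw [hM, hW, Finset.mul_sum, Finset.mul_sum, ← Finset.sum_sub_distrib,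
        ← Finset.sum_add_distrib]
      exact Finset.sum_congr rfl fun i _ => by ring
    rw [key, key, ← sub_nonneg]
    have : ∑ i, w i * F i ^ 2 - 2 * e * M + e ^ 2 * W
        - (∑ i, w i * F i ^ 2 - 2 * (M / W) * M + (M / W) ^ 2 * W) = W * (e - M / W) ^ 2 := by
      field_simp
      ring
    rw [this]
    positivity

section
variable {μ : Measure (Fin a → ℝ)} [IsProbabilityMeasure μ] {f : (Fin (a - 1) → ℝ) → ℝ}

theorem MSEfreq_PhiOpt_le {n : ℕ} (ha : 1 ≤ a) (hQpos : ∀ y x, 0 < Q y x)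
    (hf : IsContDensity μ f) (Est : (Fin n → Fin b) → (Fin a → ℝ)) :
    MSEfreq (n := n) Q μ (PhiOpt Q μ) ≤ MSEfreq Q μ Est := by
  have e : ∀ Est : (Fin n → Fin b) → (Fin a → ℝ), MSEfreq Q μ Est
      = ∑ y, ∑ α, ∑ xv, wgt Q μ xv y * (freqVec xv α - Est y α) ^ 2 := by
    intro Est
    simp only [MSEfreq, Finset.mul_sum]
    rw [Finset.sum_comm]
    exact Finset.sum_congr rfl fun y _ => Finset.sum_comm
  rw [e, e]
  exact Finset.sum_le_sum fun y _ => Finset.sum_le_sum fun α _ =>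
    weighted_mean_le (fun xv => wgt Q μ xv y) (fun xv => freqVec xv α)
      (fun xv => wgt_nonneg ha hf hQpos xv y) (Est y α)

theorem zero_mem_stdCorner (m : ℕ) : (0 : Fin m → ℝ) ∈ stdCorner m :=
  ⟨fun _ => le_rfl, by simp⟩

theorem exists_left_inverse (ha : 1 ≤ a) (hQpos : ∀ y x, 0 < Q y x) (hrank : Q.rank = a) :
    ∃ B : Matrix (Fin a) (Fin b) ℝ, B * Q = 1 := by
  have hp := emb_mem_simplex ha (zero_mem_stdCorner (a - 1))
  have hdu := (Dmat_posDef hQpos hrank hp).det_pos.ne'.isUnit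
  refine ⟨(Dmat Q (emb a 0))⁻¹ * (Qᵀ * Matrix.diagonal fun y => (Q.mulVec (emb a 0) y)⁻¹), ?_⟩
  rw [Matrix.mul_assoc]
  exact Matrix.nonsing_inv_mul _ hdu

/-- The optimal risk is `O(1/n)`, by comparison with an unbiased linear estimator. -/
theorem exists_MSEfreq_upper (ha : 1 ≤ a) (hQpos : ∀ y x, 0 < Q y x)
    (hQcol : ∀ x, ∑ y, Q y x = 1) (hrank : Q.rank = a) (hf : IsContDensity μ f) :
    ∃ C : ℝ, ∀ n : ℕ, 0 < n → (n : ℝ) * MSEfreq (n := n) Q μ (PhiOpt Q μ) ≤ C := by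
  obtain ⟨B, hB⟩ := exists_left_inverse ha hQpos hrank
  have hB' : ∀ α x, ∑ y, Q y x * B α y = if x = α then 1 else 0 := by
    intro α x
    have := congrFun (congrFun hB α) x
    rw [Matrix.mul_apply, Matrix.one_apply] at this
    simp only [mul_comm (Q _ x), this, eq_comm]
  refine ⟨∑ α, ∫ q in stdCorner (a - 1), (∑ t : Fin a × Fin b, emb a q t.1 * Q t.2 t.1 *
    (((if t.1 = α then (1 : ℝ) else 0) - B α t.2) *
      ((if t.1 = α then (1 : ℝ) else 0) - B α t.2))) * f q, fun n hn => ?_⟩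
  refine (mul_le_mul_of_nonneg_left (MSEfreq_PhiOpt_le ha hQpos hf
    (fun y α => (∑ i, B α (y i)) / n)) (Nat.cast_nonneg n)).trans (le_of_eq ?_)
  rw [MSEfreq_eq ha hf, Finset.mul_sum]
  refine Finset.sum_congr rfl fun α _ => ?_
  rw [← integral_const_mul]
  refine setIntegral_congr_fun (isClosed_stdCorner _).measurableSet fun q hq => ?_
  have h := risk_upper_bound hQcol (emb_mem_simplex ha hq) hn α (B α) (hB' α)
  rw [← mul_assoc]
  exact congrArg (· * f q) h

theorem integrable_of_continuousOn (ha : 1 ≤ a) (hf : IsContDensity μ f) {g : (Fin a → ℝ) → ℝ}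
    (hg : ContinuousOn g (simplex a)) : Integrable g μ := by
  have h : IntegrableOn g (simplex a) μ := hg.integrableOn_compact (isCompact_simplex a)
  rwa [IntegrableOn, Measure.restrict_eq_self_of_ae_mem (ae_mem_simplex ha hf)] at h

/-- The asymptotic risk is at least the mean trace of `V_p`. -/
theorem trace_integral_le_liminf (ha : 2 ≤ a) (hQpos : ∀ y x, 0 < Q y x)
    (hQcol : ∀ x, ∑ y, Q y x = 1) (hrank : Q.rank = a) (hf : IsContDensity μ f) :
    ∫ p, (Vmat Q p).trace ∂μ ≤
      Filter.liminf (fun n : ℕ => (n : ℝ) * MSEfreq (n := n) Q μ (PhiOpt Q μ)) Filter.atTop := by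
  have ha1 : 1 ≤ a := by omega
  have hV : ∀ i, ContinuousOn (fun p => Vmat Q p i i) (simplex a) := fun i =>
    continuousOn_pi.1 (continuousOn_pi.1 (continuousOn_Vmat hQpos hrank) i) i
  have hS : ∫ p, (Vmat Q p).trace ∂μ
      = ∑ α, ∫ q in stdCorner (a - 1), Vmat Q (emb a q) α α * f q := by
    simp only [Matrix.trace, Matrix.diag_apply]
    rw [integral_finsetSum _ fun i _ => integrable_of_continuousOn ha1 hf (hV i)]
    exact Finset.sum_congr rfl fun i _ => integral_eq_stdCorner ha1 hf (hV i)
  -- `liminf` in `ℝ` is only meaningful for sequences that are bounded along a subsequence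
  obtain ⟨C, hC⟩ := exists_MSEfreq_upper ha1 hQpos hQcol hrank hf
  have hcob : IsCoboundedUnder (· ≥ ·) atTop
      (fun n : ℕ => (n : ℝ) * MSEfreq (n := n) Q μ (PhiOpt Q μ)) := by
    refine IsBoundedUnder.isCoboundedUnder_ge ⟨C, ?_⟩
    rw [eventually_map]
    filter_upwards [eventually_gt_atTop 0] with n hn using hC n hn
  refine le_of_forall_pos_sub_le fun η hη => ?_
  have haR : (0 : ℝ) < a := by exact_mod_cast ha1
  choose R hR using fun α => exists_risk_bound ha hQpos hQcol hrank hf.1 hf.2.1 hf.2.2.1 α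
    (η := η / (2 * a)) (by positivity)
  refine le_liminf_of_le hcob ?_
  have hlim : Tendsto (fun n : ℕ => (∑ α, R α) / (n : ℝ)) atTop (nhds 0) :=
    tendsto_const_div_atTop_nhds_zero_nat _
  filter_upwards [eventually_gt_atTop 0, hlim.eventually (gt_mem_nhds (half_pos hη))]
    with n hn hsmall
  rw [MSEfreq_eq ha1 hf, Finset.mul_sum, hS]
  refine le_trans ?_ (Finset.sum_le_sum fun α _ => hR α n hn fun y => PhiOpt Q μ y α)
  have : ∑ _α : Fin a, η / (2 * a) = η / 2 := by
    simp only [Finset.sum_const, Finset.card_univ, Fintype.card_fin, nsmul_eq_mul]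
    field_simp
  rw [Finset.sum_sub_distrib, Finset.sum_sub_distrib, this, ← Finset.sum_div]
  linarith

/-- Jensen's inequality applied to the determinant bound on the trace of `V_p`. -/
theorem exp_le_trace_integral (ha : 2 ≤ a) (hb : 2 ≤ b) (hQpos : ∀ y x, 0 < Q y x)
    (hQcol : ∀ x, ∑ y, Q y x = 1) (hrank : Q.rank = a) (hf : IsContDensity μ f)
    (hint : Integrable (fun p => Real.log (Dmat Q p).det) μ)
    (hint2 : Integrable
      (fun p => Real.log (Gmat Q p).det - ∑ y, Real.log (Q.mulVec p y)) μ) :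
    (a : ℝ) * Real.exp (((∫ p, (Real.log (Gmat Q p).det - ∑ y, Real.log (Q.mulVec p y)) ∂μ)
      - ∫ p, Real.log (Dmat Q p).det ∂μ) / ((a : ℝ) - 1)) ≤ ∫ p, (Vmat Q p).trace ∂μ := by
  have ha1 : 1 ≤ a := by omega
  set ψ : (Fin a → ℝ) → ℝ := fun p => (Real.log (Gmat Q p).det - ∑ y, Real.log (Q.mulVec p y)
      - Real.log (Dmat Q p).det) / ((a : ℝ) - 1) with hψ
  have hψi : Integrable ψ μ := (hint2.sub hint).div_const _
  set κ := ∫ p, ψ p ∂μ with hκ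
  have hκe : κ = ((∫ p, (Real.log (Gmat Q p).det - ∑ y, Real.log (Q.mulVec p y)) ∂μ)
      - ∫ p, Real.log (Dmat Q p).det ∂μ) / ((a : ℝ) - 1) := by
    rw [hκ, hψ, integral_div, integral_sub hint2 hint]
  rw [← hκe]
  have hVi : Integrable (fun p => (Vmat Q p).trace) μ := by
    refine integrable_of_continuousOn ha1 hf ?_
    simp only [Matrix.trace, Matrix.diag_apply]
    exact continuousOn_finsetSum _ fun i _ =>
      continuousOn_pi.1 (continuousOn_pi.1 (continuousOn_Vmat hQpos hrank) i) i
  have hli : Integrable (fun p => (a : ℝ) * Real.exp κ * (ψ p + (1 - κ))) μ :=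
    (hψi.add (integrable_const _)).const_mul _
  have hmono := integral_mono_ae hli hVi (by
    filter_upwards [ae_mem_simplex ha1 hf] with p hp
    refine le_trans ?_ (trace_Vmat_ge ha hb hQpos hQcol hrank hp)
    rw [mul_assoc]
    refine mul_le_mul_of_nonneg_left ?_ (Nat.cast_nonneg a)
    -- the tangent line of `exp` at `κ`
    have h1 : ψ p - κ + 1 ≤ Real.exp (ψ p - κ) := Real.add_one_le_exp _
    calc Real.exp κ * (ψ p + (1 - κ)) ≤ Real.exp κ * Real.exp (ψ p - κ) :=
          mul_le_mul_of_nonneg_left (by linarith) (Real.exp_pos _).le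
      _ = Real.exp (ψ p) := by rw [← Real.exp_add]; congr 1; ring)
  refine le_trans (le_of_eq ?_) hmono
  rw [integral_const_mul, integral_add hψi (integrable_const _), ← hκ]
  simp
end
end

/-- asymptotic lower bound on `n · MSE^freq` in terms of
`δ_μ(Q)`. -/
theorem liminf_MSEfreq_ge_delta_bound {a b : ℕ} (ha : 2 ≤ a) (hb : 2 ≤ b)
    (Q : Matrix (Fin b) (Fin a) ℝ)
    (hQpos : ∀ y x, 0 < Q y x) (hQcol : ∀ x, ∑ y, Q y x = 1)
    (μ : Measure (Fin a → ℝ)) [IsProbabilityMeasure μ]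
    (hrank : Q.rank = a)
    (f : (Fin (a - 1) → ℝ) → ℝ) (hf : IsContDensity μ f)
    (hint : Integrable (fun p => Real.log (Dmat Q p).det) μ)
    (hint2 : Integrable
      (fun p => Real.log (Gmat Q p).det - ∑ y, Real.log (Q.mulVec p y)) μ) :
    (a : ℝ) / (2 * π * Real.exp 1) * Real.exp ((2 / ((a : ℝ) - 1)) * deltaMu Q μ) ≤
      Filter.liminf (fun n : ℕ => (n : ℝ) * MSEfreq (n := n) Q μ (PhiOpt Q μ))
        Filter.atTop := by
  refine le_trans (le_of_eq ?_) ((exp_le_trace_integral ha hb hQpos hQcol hrank hf hint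
    hint2).trans (trace_integral_le_liminf ha hQpos hQcol hrank hf))
  have ha' : (a : ℝ) - 1 ≠ 0 := by
    have : (2 : ℝ) ≤ a := by exact_mod_cast ha
    linarith
  have hc : (0 : ℝ) < 2 * π * Real.exp 1 := by positivity
  set A := ∫ p, Real.log (Dmat Q p).det ∂μ
  set B := ∫ p, (Real.log (Gmat Q p).det - ∑ y, Real.log (Q.mulVec p y)) ∂μ
  have he : 2 / ((a : ℝ) - 1) * deltaMu Q μ
      = Real.log (2 * π * Real.exp 1) + (B - A) / ((a : ℝ) - 1) := by
    simp only [deltaMu, gammaMu]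
    change 2 / ((a : ℝ) - 1) * (((a : ℝ) - 1) / 2 * Real.log (2 * π * Real.exp 1) - 1 / 2 * A
      + 1 / 2 * B) = _
    field_simp
    ring
  rw [he, Real.exp_add, Real.exp_log hc, ← mul_assoc, div_mul_cancel₀ _ hc.ne']

end
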